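/- Main theorem: Let p ∈ (1,∞) and consider −Δ_p u + V(x)|u|^{p−2}u = f(x,u) on ℤ^N, where V and f satisfy (A₁)–(A₅). Then the Nehari level c = inf_{𝒩} Φ is positive and attained, and any u ∈ 𝒩 with Φ(u) = c is a ground state solution: u is a nontrivial pointwise solution of the equation with least energy among all nontrivial solutions. -/

import Mathlib

open scoped BigOperators
open Filter Topology

noncomputable section

abbrev Vtx (N : ℕ) := Fin N → ℤ

def LatAdj {N : ℕ} (x y : Vtx N) : Prop := (∑ i, |x i - y i|) = 1

instance {N : ℕ} (x y : Vtx N) : Decidable (LatAdj x y) := by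
  unfold LatAdj; infer_instance

/-- `∑_x |u x|^p`. -/
noncomputable def lpSum (N : ℕ) (p : ℝ) (u : Vtx N → ℝ) : ℝ := ∑' x, |u x| ^ p

/-- `(1/2) ∑_{x∼y} |u x − u y|^p` (sum over ordered pairs of adjacent vertices). -/
noncomputable def pEnergy (N : ℕ) (p : ℝ) (u : Vtx N → ℝ) : ℝ :=
  (1/2) * ∑' z : Vtx N × Vtx N, if LatAdj z.1 z.2 then |u z.1 - u z.2| ^ p else 0

/-- `(1/2) ∑_{x∼y} |∇_{xy}u|^{p−2} (∇_{xy}u)(∇_{xy}v)`. -/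
noncomputable def gradPair (N : ℕ) (p : ℝ) (u v : Vtx N → ℝ) : ℝ :=
  (1/2) * ∑' z : Vtx N × Vtx N,
    if LatAdj z.1 z.2 then |u z.2 - u z.1| ^ (p - 2) * (u z.2 - u z.1) * (v z.2 - v z.1) else 0

/-- discrete p-Laplacian. -/
noncomputable def pLap (N : ℕ) (p : ℝ) (u : Vtx N → ℝ) (x : Vtx N) : ℝ :=
  ∑' y, if LatAdj x y then |u y - u x| ^ (p - 2) * (u y - u x) else 0

/-- `‖u‖^p` for the potential norm. -/
noncomputable def eNormP (N : ℕ) (p : ℝ) (V : Vtx N → ℝ) (u : Vtx N → ℝ) : ℝ :=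
  pEnergy N p u + ∑' x, V x * |u x| ^ p

/-- the potential norm `‖u‖`. -/
noncomputable def eNorm (N : ℕ) (p : ℝ) (V : Vtx N → ℝ) (u : Vtx N → ℝ) : ℝ :=
  (eNormP N p V u) ^ (1/p)

/-- `F(x,t) = ∫₀^t f(x,s) ds`. -/
noncomputable def Fprim {N : ℕ} (f : Vtx N → ℝ → ℝ) (x : Vtx N) (t : ℝ) : ℝ :=
  ∫ s in (0:ℝ)..t, f x s

/-- the variational functional `Φ`. -/
noncomputable def PhiFun (N : ℕ) (p : ℝ) (V : Vtx N → ℝ) (f : Vtx N → ℝ → ℝ)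
    (u : Vtx N → ℝ) : ℝ :=
  (1/p) * eNormP N p V u - ∑' x, Fprim f x (u x)

/-- `Φ'(u)v`. -/
noncomputable def PhiDeriv (N : ℕ) (p : ℝ) (V : Vtx N → ℝ) (f : Vtx N → ℝ → ℝ)
    (u v : Vtx N → ℝ) : ℝ :=
  gradPair N p u v + (∑' x, V x * |u x| ^ (p - 2) * u x * v x) - ∑' x, f x (u x) * v x

/-- membership in `E = ℓ^p`. -/
def memE (N : ℕ) (p : ℝ) (u : Vtx N → ℝ) : Prop := Summable fun x => |u x| ^ p

/-- the Nehari manifold. -/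
def Nehari (N : ℕ) (p : ℝ) (V : Vtx N → ℝ) (f : Vtx N → ℝ → ℝ) : Set (Vtx N → ℝ) :=
  {u | memE N p u ∧ u ≠ 0 ∧ PhiDeriv N p V f u u = 0}

/-!
On the Nehari set the functional reduces to `Φ(u) = ∑ₓ (f(x,u)u/p - F(x,u))`. By the monotonicity
(A₄) each term is nonnegative and nondecreasing along rays from `0`, and every `u` in the Nehari set
maximises `Φ` on its own ray.

A minimizing sequence is bounded in `ℓ^p` by (A₅) and stays away from `0` at some vertex by (A₃).
Periodicity moves these vertices into one cell, so a subsequence converges pointwise to some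
`u ≠ 0`, and Fatou's lemma bounds the reduced functional at `u` by the Nehari level `c`. If
`Φ'(u)u ≤ 0`, shrinking `u` onto the Nehari set only lowers the reduced functional, which gives a
minimizer. If `Φ'(u)u > 0`, cutting a large finite set out of the sequence leaves a remainder with
`Φ'(w)w < 0` and reduced functional below `c`, and shrinking that remainder contradicts the
definition of `c`.

A minimizer solves the equation because a finitely supported direction of strict descent, followed
by rescaling to the Nehari set, would lower `Φ` below `c`; since nontrivial `ℓ^p` solutions lie in
the Nehari set, it has least energy. The Nehari set need not be smooth, so no Lagrange multiplier is
used.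
-/

section Auxiliary

theorem tsum_sub_tsum_eq_sum_of_eqOn_compl {ι α : Type*} [AddCommGroup α] [TopologicalSpace α]
    [IsTopologicalAddGroup α] [T2Space α] {a b : ι → α} (ha : Summable a) (hb : Summable b)
    {s : Finset ι} (hab : ∀ i ∉ s, a i = b i) :
    ∑' i, a i - ∑' i, b i = ∑ i ∈ s, (a i - b i) := by
  rw [← ha.tsum_sub hb]
  exact tsum_eq_sum fun i hi => sub_eq_zero.2 (hab i hi)

theorem summable_and_tsum_le_of_tendsto {ι κ : Type*} {l : Filter κ} [l.NeBot] {a : κ → ι → ℝ}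
    {b : ι → ℝ} {C : κ → ℝ} {c : ℝ} (ha₀ : ∀ n i, 0 ≤ a n i) (ha : ∀ n, Summable (a n))
    (hab : ∀ i, Tendsto (a · i) l (𝓝 (b i))) (haC : ∀ n, ∑' i, a n i ≤ C n)
    (hC : Tendsto C l (𝓝 c)) : Summable b ∧ ∑' i, b i ≤ c := by
  have hb₀ : 0 ≤ b := fun i => ge_of_tendsto' (hab i) fun n => ha₀ n i
  have hb : ∀ s : Finset ι, ∑ i ∈ s, b i ≤ c := fun s =>
    le_of_tendsto_of_tendsto' (tendsto_finsetSum s fun i _ => hab i) hC fun n =>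
      ((ha n).sum_le_tsum s fun i _ => ha₀ n i).trans (haC n)
  have hsum : Summable b := summable_of_sum_le hb₀ hb
  exact ⟨hsum, hsum.tsum_le_of_sum_le hb⟩

theorem abs_sub_rpow_le {p : ℝ} (hp : 0 ≤ p) (a b : ℝ) :
    |a - b| ^ p ≤ 2 ^ p * (|a| ^ p + |b| ^ p) := by
  wlog hab : |b| ≤ |a| generalizing a b
  · rw [abs_sub_comm, add_comm]
    exact this b a (le_of_not_ge hab)
  calc |a - b| ^ p ≤ (2 * |a|) ^ p :=
        Real.rpow_le_rpow (abs_nonneg _) (by linarith [abs_sub a b]) hp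
    _ = 2 ^ p * |a| ^ p := Real.mul_rpow zero_le_two (abs_nonneg a)
    _ ≤ 2 ^ p * (|a| ^ p + |b| ^ p) := by
        gcongr
        exact le_add_of_nonneg_right (by positivity)

theorem rpow_sub_one_mul_le {p d a : ℝ} (hp : 1 ≤ p) (hd : 0 ≤ d) (ha : 0 ≤ a) :
    d ^ (p - 1) * a ≤ d ^ p + a ^ p := by
  have hm : 0 ≤ max d a := hd.trans (le_max_left d a)
  calc d ^ (p - 1) * a ≤ max d a ^ (p - 1) * max d a :=
        mul_le_mul (Real.rpow_le_rpow hd (le_max_left d a) (by linarith)) (le_max_right d a) ha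
          (by positivity)
    _ = max d a ^ p := by rw [← Real.rpow_add_one' hm (by linarith), sub_add_cancel]
    _ ≤ d ^ p + a ^ p := by
        rcases max_choice d a with h | h <;> rw [h]
        · exact le_add_of_nonneg_right (by positivity)
        · exact le_add_of_nonneg_left (by positivity)

theorem integral_sub_integral_ray {g : ℝ → ℝ} (hg : Continuous g) (a s t : ℝ) :
    (∫ r in (0 : ℝ)..t * a, g r) - ∫ r in (0 : ℝ)..s * a, g r = ∫ r in s..t, g (r * a) * a := by
  have hint (b c : ℝ) : IntervalIntegrable g MeasureTheory.volume b c :=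
    hg.intervalIntegrable b c
  rw [intervalIntegral.integral_interval_sub_left (hint _ _) (hint _ _),
    intervalIntegral.integral_mul_const, mul_comm (∫ _ in _.._, _)]
  exact (intervalIntegral.smul_integral_comp_mul_right g a).symm

theorem intervalIntegrable_ray {g : ℝ → ℝ} (hg : Continuous g) (a s t : ℝ) :
    IntervalIntegrable (fun r => g (r * a) * a) MeasureTheory.volume s t :=
  ((hg.comp (continuous_mul_const a)).mul_const a).intervalIntegrable s t

theorem mul_integral_rpow_sub_one {p : ℝ} (hp : 0 < p) (s t c : ℝ) :
    p * ∫ r in s..t, r ^ (p - 1) * c = (t ^ p - s ^ p) * c := by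
  rw [intervalIntegral.integral_mul_const, integral_rpow (Or.inl (by linarith)), sub_add_cancel]
  field_simp

end Auxiliary

/-- The duality map `r ↦ |r|^(p-2) r`, which is the derivative of `|r|^p / p`. For `p < 2` its
value at `0` is `0 ^ (p - 2) * 0 = 0`, so that it is continuous as soon as `1 < p`. -/
def dualPow (p r : ℝ) : ℝ := |r| ^ (p - 2) * r

namespace dualPow

variable {p : ℝ}

@[simp]
theorem apply_zero : dualPow p 0 = 0 := mul_zero _

@[simp]
theorem apply_neg (r : ℝ) : dualPow p (-r) = -dualPow p r := by simp [dualPow]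

theorem mul_self (hp : p ≠ 0) (r : ℝ) : dualPow p r * r = |r| ^ p := by
  rcases eq_or_ne r 0 with rfl | hr
  · simp [Real.zero_rpow hp]
  · rw [dualPow, mul_assoc, ← abs_mul_abs_self r, ← mul_assoc,
      ← Real.rpow_add_one (abs_pos.2 hr).ne', ← Real.rpow_add_one (abs_pos.2 hr).ne']
    ring_nf

theorem abs_eq (hp : p ≠ 1) (r : ℝ) : |dualPow p r| = |r| ^ (p - 1) := by
  rw [dualPow, abs_mul, abs_of_nonneg (by positivity : 0 ≤ |r| ^ (p - 2)),
    ← Real.rpow_add_one' (abs_nonneg r) (by contrapose! hp; linarith)]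
  ring_nf

theorem abs_mul_le (hp : 1 < p) (r a : ℝ) : |dualPow p r * a| ≤ |r| ^ p + |a| ^ p := by
  rw [abs_mul, abs_eq hp.ne']
  exact rpow_sub_one_mul_le hp.le (abs_nonneg r) (abs_nonneg a)

theorem hasDerivAt_abs_rpow (hp : 1 < p) (r : ℝ) :
    HasDerivAt (fun r : ℝ => |r| ^ p) (p * dualPow p r) r := by
  simpa only [dualPow, mul_assoc] using _root_.hasDerivAt_abs_rpow r hp

theorem continuous (hp : 1 < p) : Continuous (dualPow p) := by
  have hd : deriv (fun r : ℝ => |r| ^ p) = fun r => p * dualPow p r :=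
    funext fun r => (hasDerivAt_abs_rpow hp r).deriv
  have hc : Continuous fun r => p * dualPow p r :=
    hd ▸ (contDiff_norm_rpow hp).continuous_deriv le_rfl
  simpa only [inv_mul_cancel_left₀ (by linarith : p ≠ 0)] using hc.const_mul p⁻¹

end dualPow

/-- The class of nonlinearities behind the Nehari method for the `p`-growth problem: continuous,
of order `o(|t|^(p-1))` at `0`, and with `g t / |t|^(p-1)` strictly increasing on each
half-line. -/
structure IsNehariNonlinearity (p : ℝ) (g : ℝ → ℝ) : Prop where
  continuous : Continuous g
  isLittleO : g =o[𝓝 0] fun t => |t| ^ (p - 1)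
  strictMonoOn_Iio : StrictMonoOn (fun t => g t / |t| ^ (p - 1)) (Set.Iio 0)
  strictMonoOn_Ioi : StrictMonoOn (fun t => g t / |t| ^ (p - 1)) (Set.Ioi 0)

/-- The integrand `g t * t / p - ∫₀ᵗ g` of the functional `Φ(u) - Φ'(u)u / p`, with which `Φ`
agrees on the Nehari manifold. -/
def nehariIntegrand (p : ℝ) (g : ℝ → ℝ) (t : ℝ) : ℝ := g t * t / p - ∫ s in (0 : ℝ)..t, g s

@[simp]
theorem nehariIntegrand_zero (p : ℝ) (g : ℝ → ℝ) : nehariIntegrand p g 0 = 0 := by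
  simp [nehariIntegrand]

namespace IsNehariNonlinearity

variable {p : ℝ} {g : ℝ → ℝ} {a s t : ℝ}

theorem mul_self_div_rpow (ht : 0 < t) (a : ℝ) :
    g (t * a) * a / t ^ (p - 1) = g (t * a) / |t * a| ^ (p - 1) * (|a| ^ (p - 1) * a) := by
  rcases eq_or_ne a 0 with rfl | ha
  · simp
  · have := abs_pos.2 ha
    rw [abs_mul, abs_of_pos ht, Real.mul_rpow ht.le (abs_nonneg a)]
    field_simp

theorem strictMonoOn_ray (hg : IsNehariNonlinearity p g) (ha : a ≠ 0) :
    StrictMonoOn (fun t => g (t * a) * a / t ^ (p - 1)) (Set.Ioi 0) := by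
  intro s hs t ht hst
  have hpow : 0 < |a| ^ (p - 1) := Real.rpow_pos_of_pos (abs_pos.2 ha) _
  simp only [mul_self_div_rpow (p := p) hs, mul_self_div_rpow (p := p) ht]
  rcases ha.lt_or_gt with ha | ha
  · exact mul_lt_mul_of_neg_right (hg.strictMonoOn_Iio (mul_neg_of_pos_of_neg ht ha)
      (mul_neg_of_pos_of_neg hs ha) (mul_lt_mul_of_neg_right hst ha))
      (mul_neg_of_pos_of_neg hpow ha)
  · exact mul_lt_mul_of_pos_right (hg.strictMonoOn_Ioi (mul_pos hs ha) (mul_pos ht ha)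
      (mul_lt_mul_of_pos_right hst ha)) (mul_pos hpow ha)

theorem tendsto_ray (hg : IsNehariNonlinearity p g) (a : ℝ) :
    Tendsto (fun t => g (t * a) * a / t ^ (p - 1)) (𝓝[>] 0) (𝓝 0) := by
  have hray : Tendsto (fun t : ℝ => t * a) (𝓝[>] 0) (𝓝 0) :=
    tendsto_nhdsWithin_of_tendsto_nhds (by simpa using (continuous_mul_const a).tendsto 0)
  have hlim := (hg.isLittleO.tendsto_div_nhds_zero.comp hray).mul_const (|a| ^ (p - 1) * a)
  rw [zero_mul] at hlim
  refine hlim.congr' ?_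
  filter_upwards [self_mem_nhdsWithin] with t ht using (mul_self_div_rpow ht a).symm

theorem mul_self_pos (hg : IsNehariNonlinearity p g) (ha : a ≠ 0) : 0 < g a * a := by
  have hmono := hg.strictMonoOn_ray ha
  have hhalf : (0 : ℝ) ≤ g (1 / 2 * a) * a / (1 / 2) ^ (p - 1) := by
    refine le_of_tendsto (hg.tendsto_ray a) ?_
    filter_upwards [Ioc_mem_nhdsGT (by norm_num : (0 : ℝ) < 1 / 2)] with t ht
    exact hmono.monotoneOn ht.1 (by norm_num) ht.2
  simpa using hhalf.trans_lt (hmono (by norm_num) (by norm_num) (by norm_num : (1 / 2 : ℝ) < 1))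

theorem mul_self_nonneg (hg : IsNehariNonlinearity p g) (a : ℝ) : 0 ≤ g a * a := by
  rcases eq_or_ne a 0 with rfl | ha
  · simp
  · exact (hg.mul_self_pos ha).le

theorem apply_mul_le (hg : IsNehariNonlinearity p g) (a : ℝ) (hs : 0 < s) (hst : s ≤ t) :
    g (s * a) * a / s ^ (p - 1) ≤ g (t * a) * a / t ^ (p - 1) := by
  rcases eq_or_ne a 0 with rfl | ha
  · simp
  · exact (hg.strictMonoOn_ray ha).monotoneOn hs (hs.trans_le hst) hst

theorem mul_self_mul_rpow_lt (hg : IsNehariNonlinearity p g) (ha : a ≠ 0) (hs : 0 < s)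
    (hst : s < t) : g (s * a) * (s * a) * t ^ p < g (t * a) * (t * a) * s ^ p := by
  have ht : 0 < t := hs.trans hst
  have hray := hg.strictMonoOn_ray ha hs ht hst
  simp only at hray
  rw [div_lt_div_iff₀ (by positivity) (by positivity)] at hray
  calc g (s * a) * (s * a) * t ^ p = s * t * (g (s * a) * a * t ^ (p - 1)) := by
        rw [Real.rpow_sub_one ht.ne']; field_simp
    _ < s * t * (g (t * a) * a * s ^ (p - 1)) := by gcongr
    _ = g (t * a) * (t * a) * s ^ p := by rw [Real.rpow_sub_one hs.ne']; field_simp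

theorem mul_self_mul_rpow_le (hg : IsNehariNonlinearity p g) (a : ℝ) (hs : 0 < s)
    (hst : s ≤ t) : g (s * a) * (s * a) * t ^ p ≤ g (t * a) * (t * a) * s ^ p := by
  rcases eq_or_ne a 0 with rfl | ha
  · simp
  rcases hst.eq_or_lt with rfl | hst
  · rfl
  · exact (hg.mul_self_mul_rpow_lt ha hs hst).le

theorem mul_self_le_of_le_one (hg : IsNehariNonlinearity p g) (a : ℝ) (hs : 0 < s)
    (hs1 : s ≤ 1) : g (s * a) * (s * a) ≤ s ^ p * (g a * a) := by
  simpa [mul_comm (s ^ p)] using hg.mul_self_mul_rpow_le a hs hs1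

theorem mul_self_le_mul_self (hp : 0 ≤ p) (hg : IsNehariNonlinearity p g) (a : ℝ) (hs : 0 < s)
    (hst : s ≤ t) : g (s * a) * (s * a) ≤ g (t * a) * (t * a) := by
  have ht : 0 < t := hs.trans_le hst
  refine le_of_mul_le_mul_right ((hg.mul_self_mul_rpow_le a hs hst).trans ?_)
    (Real.rpow_pos_of_pos ht p)
  exact mul_le_mul_of_nonneg_left (Real.rpow_le_rpow hs.le hst hp) (hg.mul_self_nonneg _)

theorem apply_mul_mul_nonneg (hg : IsNehariNonlinearity p g) (a : ℝ) (ht : 0 < t) :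
    0 ≤ g (t * a) * a :=
  nonneg_of_mul_nonneg_right (by linarith [hg.mul_self_nonneg (t * a)]) ht

theorem primitive_nonneg (hg : IsNehariNonlinearity p g) (a : ℝ) :
    0 ≤ ∫ s in (0 : ℝ)..a, g s := by
  have hray := integral_sub_integral_ray hg.continuous a 0 1
  simp only [one_mul, zero_mul, intervalIntegral.integral_same, sub_zero] at hray
  have hmono := intervalIntegral.integral_mono_on_of_le_Ioo zero_le_one
    intervalIntegrable_const (intervalIntegrable_ray hg.continuous a 0 1)
    fun r hr => hg.apply_mul_mul_nonneg a hr.1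
  rwa [intervalIntegral.integral_zero, ← hray] at hmono

theorem mul_primitive_sub_primitive_le (hp : 0 < p) (hg : IsNehariNonlinearity p g) (a : ℝ)
    (ht : 0 ≤ t) :
    p * ((∫ s in (0 : ℝ)..a, g s) - ∫ s in (0 : ℝ)..t * a, g s) ≤ (1 - t ^ p) * (g a * a) := by
  have hpow (s t : ℝ) : IntervalIntegrable (fun r : ℝ => r ^ (p - 1) * (g a * a))
      MeasureTheory.volume s t :=
    (intervalIntegral.intervalIntegrable_rpow' (by linarith)).mul_const _
  rcases le_total t 1 with ht1 | ht1
  · have hmono := intervalIntegral.integral_mono_on_of_le_Ioo ht1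
      (intervalIntegrable_ray hg.continuous a t 1) (hpow t 1) fun r hr => by
        have hr0 : 0 < r := ht.trans_lt hr.1
        simpa [div_le_iff₀ (Real.rpow_pos_of_pos hr0 _), mul_comm] using
          hg.apply_mul_le a hr0 hr.2.le
    rw [← integral_sub_integral_ray hg.continuous, one_mul] at hmono
    simpa only [mul_integral_rpow_sub_one hp, Real.one_rpow] using
      mul_le_mul_of_nonneg_left hmono hp.le
  · have hmono := intervalIntegral.integral_mono_on_of_le_Ioo ht1
      (hpow 1 t) (intervalIntegrable_ray hg.continuous a 1 t) fun r hr => by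
        have hr0 : 0 < r := one_pos.trans hr.1
        simpa [le_div_iff₀ (Real.rpow_pos_of_pos hr0 _), mul_comm] using
          hg.apply_mul_le a one_pos hr.1.le
    rw [← integral_sub_integral_ray hg.continuous, one_mul] at hmono
    have hle := mul_le_mul_of_nonneg_left hmono hp.le
    rw [mul_integral_rpow_sub_one hp, Real.one_rpow] at hle
    linarith

theorem continuous_nehariIntegrand (hg : IsNehariNonlinearity p g) :
    Continuous (nehariIntegrand p g) :=
  ((hg.continuous.mul continuous_id).div_const p).sub
    (intervalIntegral.continuous_primitive (fun _ _ => hg.continuous.intervalIntegrable _ _) 0)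

theorem mul_nehariIntegrand (hp : p ≠ 0) (g : ℝ → ℝ) (a : ℝ) :
    p * nehariIntegrand p g a = g a * a - p * ∫ s in (0 : ℝ)..a, g s := by
  rw [nehariIntegrand, mul_sub, mul_div_cancel₀ _ hp]

theorem nehariIntegrand_nonneg (hp : 0 < p) (hg : IsNehariNonlinearity p g) (a : ℝ) :
    0 ≤ nehariIntegrand p g a := by
  have hle := hg.mul_primitive_sub_primitive_le hp a le_rfl
  simp only [zero_mul, intervalIntegral.integral_same, Real.zero_rpow hp.ne', sub_zero,
    one_mul] at hle
  refine nonneg_of_mul_nonneg_right ?_ hp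
  linarith [mul_nehariIntegrand hp.ne' g a]

theorem nehariIntegrand_pos (hp : 0 < p) (hg : IsNehariNonlinearity p g) (ha : a ≠ 0) :
    0 < nehariIntegrand p g a := by
  have hle := hg.mul_primitive_sub_primitive_le hp a (t := 1 / 2) (by norm_num)
  have hlt := hg.mul_self_mul_rpow_lt ha (s := 1 / 2) (t := 1) (by norm_num) (by norm_num)
  have hhalf := mul_nonneg hp.le (hg.nehariIntegrand_nonneg hp (1 / 2 * a))
  rw [mul_nehariIntegrand hp.ne'] at hhalf
  rw [Real.one_rpow, mul_one, one_mul] at hlt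
  refine pos_of_mul_pos_right ?_ hp.le
  linarith [mul_nehariIntegrand hp.ne' g a]

theorem nehariIntegrand_mul_le (hp : 0 < p) (hg : IsNehariNonlinearity p g) (a : ℝ) (hs : 0 < s)
    (hs1 : s ≤ 1) : nehariIntegrand p g (s * a) ≤ nehariIntegrand p g a := by
  refine le_of_mul_le_mul_left ?_ hp
  rw [mul_nehariIntegrand hp.ne', mul_nehariIntegrand hp.ne']
  linarith [hg.mul_primitive_sub_primitive_le hp a hs.le, hg.mul_self_le_of_le_one a hs hs1]

theorem primitive_le (hp : 0 < p) (hg : IsNehariNonlinearity p g) (a : ℝ) :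
    ∫ s in (0 : ℝ)..a, g s ≤ g a * a / p :=
  sub_nonneg.1 (hg.nehariIntegrand_nonneg hp a)

end IsNehariNonlinearity

section Lattice

variable {N : ℕ} {x y : Vtx N}

namespace LatAdj

theorem symm (h : LatAdj x y) : LatAdj y x := by
  simpa only [LatAdj, abs_sub_comm] using h

theorem comm : LatAdj x y ↔ LatAdj y x := ⟨symm, symm⟩

theorem add_right_iff (k : Vtx N) : LatAdj (x + k) (y + k) ↔ LatAdj x y := by
  simp [LatAdj]

theorem mem_Icc (h : LatAdj x y) : y ∈ Finset.Icc (x - 1) (x + 1) := by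
  have hcoord (i : Fin N) : |x i - y i| ≤ 1 :=
    h ▸ Finset.single_le_sum (f := fun i => |x i - y i|) (fun i _ => abs_nonneg _)
      (Finset.mem_univ i)
  rw [Finset.mem_Icc]
  constructor <;> intro i <;> have := abs_le.1 (hcoord i) <;>
    simp only [Pi.sub_apply, Pi.add_apply, Pi.one_apply] <;> omega

end LatAdj

/-- The finite set of neighbours of a vertex of the lattice graph. -/
def latNeighbors (x : Vtx N) : Finset (Vtx N) := {y ∈ Finset.Icc (x - 1) (x + 1) | LatAdj x y}

@[simp]
theorem mem_latNeighbors : y ∈ latNeighbors x ↔ LatAdj x y := by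
  simpa [latNeighbors] using fun h : LatAdj x y => Finset.mem_Icc.1 h.mem_Icc

theorem card_latNeighbors_le (x : Vtx N) : (latNeighbors x).card ≤ 3 ^ N := by
  refine (Finset.card_filter_le _ _).trans_eq ?_
  simp only [Pi.card_Icc, Pi.sub_apply, Pi.add_apply, Pi.one_apply, Int.card_Icc]
  simp [show ∀ a : ℤ, (a + 1 + 1 - (a - 1)).toNat = 3 by omega]

theorem hasSum_ite_latAdj (x : Vtx N) (g : Vtx N → ℝ) :
    HasSum (fun y => if LatAdj x y then g y else 0) (∑ y ∈ latNeighbors x, g y) := by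
  rw [← Finset.sum_congr rfl fun y hy => if_pos (mem_latNeighbors.1 hy)]
  exact hasSum_sum_of_ne_finset_zero fun y hy => if_neg (mem_latNeighbors.not.1 hy)

section EdgeSums

variable {h : Vtx N → Vtx N → ℝ}

theorem tsum_ite_latAdj_eq
    (hs : Summable fun z : Vtx N × Vtx N => if LatAdj z.1 z.2 then h z.1 z.2 else 0) :
    ∑' z : Vtx N × Vtx N, (if LatAdj z.1 z.2 then h z.1 z.2 else 0) =
      ∑' x, ∑ y ∈ latNeighbors x, h x y :=
  hs.tsum_prod.trans (tsum_congr fun x => (hasSum_ite_latAdj x (h x)).tsum_eq)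

theorem summable_sum_latNeighbors
    (hs : Summable fun z : Vtx N × Vtx N => if LatAdj z.1 z.2 then h z.1 z.2 else 0) :
    Summable fun x => ∑ y ∈ latNeighbors x, h x y :=
  hs.prod.congr fun x => (hasSum_ite_latAdj x (h x)).tsum_eq

variable {g : Vtx N → ℝ}

theorem summable_ite_latAdj_fst (hg₀ : 0 ≤ g) (hg : Summable g) :
    Summable fun z : Vtx N × Vtx N => if LatAdj z.1 z.2 then g z.1 else 0 := by
  refine (summable_prod_of_nonneg fun z => ?_).2
    ⟨fun x => (hasSum_ite_latAdj x fun _ => g x).summable, ?_⟩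
  · rw [Pi.zero_apply]
    split_ifs
    exacts [hg₀ _, le_rfl]
  · simp only [fun x => (hasSum_ite_latAdj x fun _ => g x).tsum_eq, Finset.sum_const]
    refine (hg.mul_left (3 ^ N)).of_nonneg_of_le (fun x => nsmul_nonneg (hg₀ x) _) fun x => ?_
    rw [nsmul_eq_mul]
    exact mul_le_mul_of_nonneg_right (mod_cast card_latNeighbors_le x) (hg₀ x)

theorem tsum_ite_latAdj_fst_le (hg₀ : 0 ≤ g) (hg : Summable g) :
    ∑' z : Vtx N × Vtx N, (if LatAdj z.1 z.2 then g z.1 else 0) ≤ 3 ^ N * ∑' x, g x := by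
  have hs := summable_ite_latAdj_fst hg₀ hg
  rw [tsum_ite_latAdj_eq (h := fun x _ => g x) hs, ← tsum_mul_left]
  refine (summable_sum_latNeighbors (h := fun x _ => g x) hs).tsum_le_tsum (fun x => ?_)
    (hg.mul_left _)
  rw [Finset.sum_const, nsmul_eq_mul]
  exact mul_le_mul_of_nonneg_right (mod_cast card_latNeighbors_le x) (hg₀ x)

theorem ite_latAdj_snd (g : Vtx N → ℝ) :
    (fun z : Vtx N × Vtx N => if LatAdj z.1 z.2 then g z.2 else 0) =
      (fun z => if LatAdj z.1 z.2 then g z.1 else 0) ∘ Equiv.prodComm _ _ := by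
  funext z
  simp only [Function.comp_apply, Equiv.prodComm_apply, Prod.fst_swap, Prod.snd_swap,
    LatAdj.comm (x := z.2)]

theorem summable_ite_latAdj_snd (hg₀ : 0 ≤ g) (hg : Summable g) :
    Summable fun z : Vtx N × Vtx N => if LatAdj z.1 z.2 then g z.2 else 0 := by
  rw [ite_latAdj_snd]
  exact (Equiv.prodComm _ _).summable_iff.2 (summable_ite_latAdj_fst hg₀ hg)

theorem summable_ite_latAdj_add (hg₀ : 0 ≤ g) (hg : Summable g) :
    Summable fun z : Vtx N × Vtx N => if LatAdj z.1 z.2 then g z.1 + g z.2 else 0 := by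
  refine ((summable_ite_latAdj_fst hg₀ hg).add (summable_ite_latAdj_snd hg₀ hg)).congr fun z => ?_
  rw [← ite_add_zero]

theorem tsum_ite_latAdj_add_le (hg₀ : 0 ≤ g) (hg : Summable g) :
    ∑' z : Vtx N × Vtx N, (if LatAdj z.1 z.2 then g z.1 + g z.2 else 0) ≤
      2 * 3 ^ N * ∑' x, g x := by
  simp only [ite_add_zero]
  have hsnd : ∑' z : Vtx N × Vtx N, (if LatAdj z.1 z.2 then g z.2 else 0) =
      ∑' z : Vtx N × Vtx N, if LatAdj z.1 z.2 then g z.1 else 0 := by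
    rw [ite_latAdj_snd]
    exact (Equiv.prodComm _ _).tsum_eq fun z => if LatAdj z.1 z.2 then g z.1 else 0
  rw [(summable_ite_latAdj_fst hg₀ hg).tsum_add (summable_ite_latAdj_snd hg₀ hg), hsnd]
  linarith [tsum_ite_latAdj_fst_le hg₀ hg]

theorem summable_ite_latAdj_of_abs_le (hg₀ : 0 ≤ g) (hg : Summable g)
    (hle : ∀ x y, |h x y| ≤ g x + g y) :
    Summable fun z : Vtx N × Vtx N => if LatAdj z.1 z.2 then h z.1 z.2 else 0 := by
  refine (summable_ite_latAdj_add hg₀ hg).of_norm_bounded fun z => ?_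
  split_ifs
  exacts [hle z.1 z.2, norm_zero.le]

end EdgeSums

section Periodic

variable {α : Type*} {G : Vtx N → α}

theorem periodic_zsmul_of_forall_single {T : ℤ}
    (hG : ∀ x (i : Fin N), G (x + T • Pi.single i 1) = G x) (k : Vtx N) :
    Function.Periodic G (T • k) := by
  have hk : T • k = ∑ i, k i • T • (Pi.single i 1 : Vtx N) := by
    funext j
    simp [Finset.sum_apply, Pi.single_apply, mul_comm]
  rw [hk]
  refine Finset.sum_induction _ (Function.Periodic G) (fun _ _ ha hb => ha.add_period hb)
    (fun x => by rw [add_zero]) fun i _ => ?_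
  exact Function.Periodic.zsmul (fun x => hG x i) (k i)

theorem exists_add_zsmul_mem_Icc {T : ℤ} (hT : 0 < T) (x : Vtx N) :
    ∃ k : Vtx N, x + T • k ∈ Set.Icc 0 fun _ => T := by
  refine ⟨fun i => -(x i / T), fun i => ?_, fun i => ?_⟩ <;>
    have hmod : x i + T • -(x i / T) = x i % T := by
      rw [smul_eq_mul, mul_neg, ← sub_eq_add_neg, Int.emod_def]
  · exact (Int.emod_nonneg _ hT.ne').trans_eq hmod.symm
  · exact hmod.trans_le (Int.emod_lt_of_pos _ hT).le

theorem finite_range_of_periodic {T : ℤ} (hT : 0 < T)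
    (hG : ∀ k : Vtx N, Function.Periodic G (T • k)) : (Set.range G).Finite := by
  refine ((Set.finite_Icc (0 : Vtx N) fun _ => T).image G).subset ?_
  rintro _ ⟨x, rfl⟩
  obtain ⟨k, hk⟩ := exists_add_zsmul_mem_Icc hT x
  exact ⟨_, hk, hG k x⟩

end Periodic

end Lattice

section Lp

variable {N : ℕ} {p : ℝ} {u v : Vtx N → ℝ}

namespace memE

theorem of_abs_le (hp : 0 ≤ p) (hu : memE N p u) (hvu : ∀ x, |v x| ≤ |u x|) : memE N p v :=
  Summable.of_nonneg_of_le (fun _ => by positivity)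
    (fun x => Real.rpow_le_rpow (abs_nonneg _) (hvu x) hp) hu

theorem const_smul (hu : memE N p u) (t : ℝ) : memE N p (t • u) :=
  (Summable.mul_left (|t| ^ p) hu).congr fun x => by
    simp [abs_mul, Real.mul_rpow (abs_nonneg t) (abs_nonneg (u x))]

theorem neg (hu : memE N p u) : memE N p (-u) := by
  simpa using hu.const_smul (-1)

theorem sub (hp : 0 ≤ p) (hu : memE N p u) (hv : memE N p v) : memE N p (u - v) :=
  Summable.of_nonneg_of_le (fun _ => by positivity) (fun x => abs_sub_rpow_le hp (u x) (v x))
    ((Summable.add hu hv).mul_left _)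

theorem add (hp : 0 ≤ p) (hu : memE N p u) (hv : memE N p v) : memE N p (u + v) := by
  simpa using hu.sub hp hv.neg

theorem of_finite_support (hp : p ≠ 0) (hv : v.support.Finite) : memE N p v :=
  summable_of_hasFiniteSupport <| hv.subset fun x hx h0 => hx (by simp [h0, Real.zero_rpow hp])

theorem abs_rpow_le_lpSum (hu : memE N p u) (x : Vtx N) : |u x| ^ p ≤ lpSum N p u :=
  Summable.le_tsum hu x fun _ _ => by positivity

theorem exists_abs_le (hp : 0 < p) (hu : memE N p u) : ∃ B, ∀ x, |u x| ≤ B :=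
  ⟨lpSum N p u ^ p⁻¹, fun x => (Real.le_rpow_inv_iff_of_pos (abs_nonneg _)
    (tsum_nonneg fun _ => by positivity) hp).2 (hu.abs_rpow_le_lpSum x)⟩

theorem eventually_abs_lt (hp : 0 < p) (hu : memE N p u) {δ : ℝ} (hδ : 0 < δ) :
    ∀ᶠ x in cofinite, |u x| < δ := by
  filter_upwards [hu.tendsto_cofinite_zero.eventually_lt_const (Real.rpow_pos_of_pos hδ p)]
    with x hx using (Real.rpow_lt_rpow_iff (abs_nonneg _) hδ.le hp).1 hx

theorem lpSum_pos (hu : memE N p u) (hu₀ : u ≠ 0) : 0 < lpSum N p u := by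
  obtain ⟨x, hx⟩ := Function.ne_iff.1 hu₀
  exact Summable.tsum_pos hu (fun _ => by positivity) x (Real.rpow_pos_of_pos (abs_pos.2 hx) p)

theorem summable_dualPow_mul (hp : 1 < p) (hu : memE N p u) (hv : memE N p v) :
    Summable fun x => dualPow p (u x) * v x :=
  (Summable.add hu hv).of_norm_bounded fun x => dualPow.abs_mul_le hp (u x) (v x)

theorem summable_edge_rpow (hp : 0 ≤ p) (hu : memE N p u) :
    Summable fun z : Vtx N × Vtx N => if LatAdj z.1 z.2 then |u z.1 - u z.2| ^ p else 0 := by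
  refine summable_ite_latAdj_of_abs_le (h := fun x y => |u x - u y| ^ p)
    (g := fun x => 2 ^ p * |u x| ^ p) (fun _ => by positivity) (hu.mul_left _) fun x y => ?_
  rw [abs_of_nonneg (by positivity), ← mul_add]
  exact abs_sub_rpow_le hp (u x) (u y)

theorem pEnergy_le (hp : 0 ≤ p) (hu : memE N p u) :
    pEnergy N p u ≤ 2 ^ p * 3 ^ N * lpSum N p u := by
  set g : Vtx N → ℝ := fun x => 2 ^ p * |u x| ^ p
  have hg₀ : 0 ≤ g := fun _ => by positivity
  have hg : Summable g := Summable.mul_left _ hu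
  have hle : ∑' z : Vtx N × Vtx N, (if LatAdj z.1 z.2 then |u z.1 - u z.2| ^ p else 0) ≤
      ∑' z : Vtx N × Vtx N, if LatAdj z.1 z.2 then g z.1 + g z.2 else 0 := by
    refine (hu.summable_edge_rpow hp).tsum_le_tsum (fun z => ?_) (summable_ite_latAdj_add hg₀ hg)
    split_ifs
    · exact (abs_sub_rpow_le hp _ _).trans_eq (mul_add _ _ _)
    · rfl
  have hg_sum : ∑' x, g x = 2 ^ p * lpSum N p u := tsum_mul_left
  have hedge := tsum_ite_latAdj_add_le hg₀ hg
  rw [hg_sum] at hedge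
  rw [pEnergy]
  linarith

theorem summable_edge_dualPow_mul_sub (hp : 1 < p) (hu : memE N p u) (hv : memE N p v) :
    Summable fun z : Vtx N × Vtx N =>
      if LatAdj z.1 z.2 then dualPow p (u z.2 - u z.1) * (v z.2 - v z.1) else 0 := by
  refine summable_ite_latAdj_of_abs_le
    (h := fun x y => dualPow p (u y - u x) * (v y - v x))
    (g := fun x => 2 ^ p * (|u x| ^ p + |v x| ^ p)) (fun _ => by positivity)
    ((Summable.add hu hv).mul_left _) fun x y => (dualPow.abs_mul_le hp _ _).trans ?_
  linarith [abs_sub_rpow_le (by linarith : 0 ≤ p) (u y) (u x),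
    abs_sub_rpow_le (by linarith : 0 ≤ p) (v y) (v x)]

theorem summable_edge_dualPow_mul (hp : 1 < p) (hu : memE N p u) (hv : memE N p v) :
    Summable fun z : Vtx N × Vtx N =>
      if LatAdj z.1 z.2 then dualPow p (u z.2 - u z.1) * v z.1 else 0 := by
  refine summable_ite_latAdj_of_abs_le (h := fun x y => dualPow p (u y - u x) * v x)
    (g := fun x => 2 ^ p * |u x| ^ p + |v x| ^ p) (fun _ => by positivity)
    ((Summable.mul_left _ hu).add hv) fun x y => (dualPow.abs_mul_le hp _ _).trans ?_
  linarith [abs_sub_rpow_le (by linarith : 0 ≤ p) (u y) (u x),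
    Real.rpow_nonneg (abs_nonneg (v y)) p]

theorem summable_sum_edge_rpow (hp : 0 ≤ p) (hu : memE N p u) :
    Summable fun x => ∑ y ∈ latNeighbors x, |u x - u y| ^ p :=
  summable_sum_latNeighbors (h := fun x y => |u x - u y| ^ p) (hu.summable_edge_rpow hp)

theorem summable_sum_edge_dualPow_mul_sub (hp : 1 < p) (hu : memE N p u) (hv : memE N p v) :
    Summable fun x => ∑ y ∈ latNeighbors x, dualPow p (u y - u x) * (v y - v x) :=
  summable_sum_latNeighbors (h := fun x y => dualPow p (u y - u x) * (v y - v x))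
    (hu.summable_edge_dualPow_mul_sub hp hv)

end memE

theorem pEnergy_nonneg (u : Vtx N → ℝ) : 0 ≤ pEnergy N p u :=
  mul_nonneg (by norm_num) (tsum_nonneg fun _ => by split_ifs <;> positivity)

theorem pEnergy_smul (t : ℝ) (u : Vtx N → ℝ) : pEnergy N p (t • u) = |t| ^ p * pEnergy N p u := by
  rw [pEnergy, pEnergy, mul_left_comm, ← tsum_mul_left (a := |t| ^ p)]
  refine congrArg _ (tsum_congr fun z => ?_)
  rw [mul_ite, mul_zero, Pi.smul_apply, Pi.smul_apply, ← smul_sub, smul_eq_mul, abs_mul,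
    Real.mul_rpow (abs_nonneg _) (abs_nonneg _)]

theorem eNormP_smul (V : Vtx N → ℝ) (t : ℝ) (u : Vtx N → ℝ) :
    eNormP N p V (t • u) = |t| ^ p * eNormP N p V u := by
  rw [eNormP, eNormP, mul_add, pEnergy_smul, ← tsum_mul_left]
  refine congrArg _ (tsum_congr fun x => ?_)
  rw [Pi.smul_apply, smul_eq_mul, abs_mul, Real.mul_rpow (abs_nonneg _) (abs_nonneg _),
    mul_left_comm]

theorem gradPair_self (hp : p ≠ 0) (u : Vtx N → ℝ) : gradPair N p u u = pEnergy N p u :=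
  congrArg _ <| tsum_congr fun z => by rw [← dualPow, dualPow.mul_self hp, abs_sub_comm]

theorem PhiDeriv_self (hp : p ≠ 0) (V : Vtx N → ℝ) (f : Vtx N → ℝ → ℝ) (u : Vtx N → ℝ) :
    PhiDeriv N p V f u u = eNormP N p V u - ∑' x, f x (u x) * u x := by
  have hpot : ∑' x, V x * |u x| ^ (p - 2) * u x * u x = ∑' x, V x * |u x| ^ p :=
    tsum_congr fun x => by rw [mul_assoc (V x), ← dualPow, mul_assoc, dualPow.mul_self hp]
  rw [PhiDeriv, gradPair_self hp, hpot, eNormP]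

theorem PhiDeriv_smul_self (hp : p ≠ 0) (V : Vtx N → ℝ) (f : Vtx N → ℝ → ℝ) (u : Vtx N → ℝ)
    (t : ℝ) :
    PhiDeriv N p V f (t • u) (t • u) =
      |t| ^ p * eNormP N p V u - ∑' x, f x (t * u x) * (t * u x) := by
  rw [PhiDeriv_self hp, eNormP_smul]
  rfl

theorem eNormP_eq_of_mem_Nehari (hp : p ≠ 0) {V : Vtx N → ℝ} {f : Vtx N → ℝ → ℝ}
    (hu : u ∈ Nehari N p V f) : eNormP N p V u = ∑' x, f x (u x) * u x := by
  rw [← sub_eq_zero, ← PhiDeriv_self hp]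
  exact hu.2.2

theorem PhiDeriv_zero_right (V : Vtx N → ℝ) (f : Vtx N → ℝ → ℝ) (u : Vtx N → ℝ) :
    PhiDeriv N p V f u 0 = 0 := by
  simp [PhiDeriv, gradPair]

theorem pLap_eq_sum (u : Vtx N → ℝ) (x : Vtx N) :
    pLap N p u x = ∑ y ∈ latNeighbors x, dualPow p (u y - u x) :=
  (hasSum_ite_latAdj x fun y => dualPow p (u y - u x)).tsum_eq

theorem gradPair_eq_neg_tsum_pLap_mul (hp : 1 < p) (hu : memE N p u) (hv : memE N p v) :
    gradPair N p u v = -∑' x, pLap N p u x * v x := by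
  set G : Vtx N × Vtx N → ℝ :=
    fun z => if LatAdj z.1 z.2 then dualPow p (u z.2 - u z.1) * v z.1 else 0 with hG
  have hGs : Summable G := hu.summable_edge_dualPow_mul hp hv
  have hswap : Summable (G ∘ Prod.swap) := (Equiv.prodComm _ _).summable_iff.2 hGs
  have hpair : gradPair N p u v = 1 / 2 * ∑' z, (-G z - (G ∘ Prod.swap) z) := by
    refine congrArg _ (tsum_congr fun z => ?_)
    simp only [hG, Function.comp_apply, Prod.fst_swap, Prod.snd_swap, LatAdj.comm (x := z.2),
      ← neg_sub (u z.2), dualPow.apply_neg]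
    split_ifs
    · rw [← dualPow]; ring
    · simp
  have hsum : ∑' z, G z = ∑' x, pLap N p u x * v x := by
    rw [tsum_ite_latAdj_eq (h := fun x y => dualPow p (u y - u x) * v x) hGs]
    exact tsum_congr fun x => by rw [pLap_eq_sum, Finset.sum_mul]
  have htsum_swap : ∑' z, (G ∘ Prod.swap) z = ∑' z, G z := (Equiv.prodComm _ _).tsum_eq G
  rw [hpair, hGs.neg.tsum_sub hswap, tsum_neg, htsum_swap, hsum]
  ring

theorem summable_pLap_mul (hp : 1 < p) (hu : memE N p u) (hv : memE N p v) :
    Summable fun x => pLap N p u x * v x :=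
  (summable_sum_latNeighbors (h := fun x y => dualPow p (u y - u x) * v x)
    (hu.summable_edge_dualPow_mul hp hv)).congr fun x => by rw [pLap_eq_sum, Finset.sum_mul]

end Lp

/-- The standing assumptions of the variational method on `ℓ^p`: `1 < p`, a potential between two
positive constants, and nonlinearities that satisfy the Nehari monotonicity condition and are
`o(|t|^(p-1))` at `0` uniformly in the vertex. Neither periodicity nor superlinear growth is
included. -/
structure IsNehariSystem {N : ℕ} (p : ℝ) (V : Vtx N → ℝ) (f : Vtx N → ℝ → ℝ) : Prop where
  one_lt : 1 < p
  exists_pos_le : ∃ V₀ > 0, ∀ x, V₀ ≤ V x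
  exists_le : ∃ V₁, ∀ x, V x ≤ V₁
  nonlinearity : ∀ x, IsNehariNonlinearity p (f x)
  uniform_isLittleO : ∀ ε > 0, ∃ δ > 0, ∀ x t, |t| < δ → |f x t| ≤ ε * |t| ^ (p - 1)

section Densities

variable {N : ℕ} {p : ℝ} {V : Vtx N → ℝ} {f : Vtx N → ℝ → ℝ} {u v w : Vtx N → ℝ} {x : Vtx N}

/-- The contribution of the vertex `x` to `Φ(u)`; each edge is shared between its two
endpoints. -/
def phiDensity (p : ℝ) (V : Vtx N → ℝ) (f : Vtx N → ℝ → ℝ) (u : Vtx N → ℝ) (x : Vtx N) : ℝ :=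
  1 / p * (1 / 2 * ∑ y ∈ latNeighbors x, |u x - u y| ^ p + V x * |u x| ^ p) - Fprim f x (u x)

/-- The contribution of the vertex `x` to `Φ'(u)v`; each edge is shared between its two
endpoints. -/
def phiDerivDensity (p : ℝ) (V : Vtx N → ℝ) (f : Vtx N → ℝ → ℝ) (u v : Vtx N → ℝ)
    (x : Vtx N) : ℝ :=
  1 / 2 * ∑ y ∈ latNeighbors x, dualPow p (u y - u x) * (v y - v x) +
    V x * (dualPow p (u x) * v x) - f x (u x) * v x

theorem phiDensity_congr (hx : u x = w x) (hN : ∀ y ∈ latNeighbors x, u y = w y) :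
    phiDensity p V f u x = phiDensity p V f w x := by
  rw [phiDensity, phiDensity, hx, Finset.sum_congr rfl fun y hy => by rw [hN y hy]]

theorem phiDerivDensity_self_congr (hx : u x = w x) (hN : ∀ y ∈ latNeighbors x, u y = w y) :
    phiDerivDensity p V f u u x = phiDerivDensity p V f w w x := by
  rw [phiDerivDensity, phiDerivDensity, hx, Finset.sum_congr rfl fun y hy => by rw [hN y hy]]

theorem phiDerivDensity_eq_zero (hx : v x = 0) (hN : ∀ y ∈ latNeighbors x, v y = 0) :
    phiDerivDensity p V f u v x = 0 := by
  rw [phiDerivDensity, hx, Finset.sum_eq_zero fun y hy => by rw [hN y hy, sub_self, mul_zero]]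
  simp

theorem hasDerivAt_phiDensity (hp : 1 < p) (hf : Continuous (f x)) (V : Vtx N → ℝ)
    (u v : Vtx N → ℝ) (θ : ℝ) :
    HasDerivAt (fun θ : ℝ => phiDensity p V f (u + θ • v) x)
      (phiDerivDensity p V f (u + θ • v) v x) θ := by
  have hline (y : Vtx N) : HasDerivAt (fun θ : ℝ => (u + θ • v) y) (v y) θ := by
    simpa using ((hasDerivAt_id θ).mul_const (v y)).const_add (u y)
  have hpow {c : ℝ → ℝ} {c' : ℝ} (hc : HasDerivAt c c' θ) :
      HasDerivAt (fun θ => |c θ| ^ p) (p * dualPow p (c θ) * c') θ :=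
    (dualPow.hasDerivAt_abs_rpow hp (c θ)).comp θ hc
  have hedges := HasDerivAt.fun_sum fun y (_ : y ∈ latNeighbors x) => hpow ((hline x).sub (hline y))
  have hF : HasDerivAt (fun θ : ℝ => Fprim f x ((u + θ • v) x)) (f x ((u + θ • v) x) * v x) θ :=
    (hf.integral_hasStrictDerivAt 0 _).hasDerivAt.comp θ (hline x)
  refine ((((hedges.const_mul (1 / 2)).add ((hpow (hline x)).const_mul (V x))).const_mul
    (1 / p)).sub hF).congr_deriv ?_
  have hp0 : p ≠ 0 := by linarith
  have hsum : ∑ y ∈ latNeighbors x, p * dualPow p ((u + θ • v) x - (u + θ • v) y) * (v x - v y) =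
      p * ∑ y ∈ latNeighbors x, dualPow p ((u + θ • v) y - (u + θ • v) x) * (v y - v x) := by
    rw [Finset.mul_sum]
    refine Finset.sum_congr rfl fun y _ => ?_
    rw [← neg_sub ((u + θ • v) y), dualPow.apply_neg]
    ring
  simp only [Pi.sub_apply]
  rw [hsum, phiDerivDensity]
  field_simp

theorem continuous_phiDerivDensity_self (hp : 1 < p) (hf : Continuous (f x)) (V : Vtx N → ℝ) :
    Continuous fun u => phiDerivDensity p V f u u x := by
  have hd := dualPow.continuous hp
  unfold phiDerivDensity
  fun_prop

theorem continuous_phiDerivDensity_left (hp : 1 < p) (hf : Continuous (f x)) (V v : Vtx N → ℝ) :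
    Continuous fun u => phiDerivDensity p V f u v x := by
  have hd := dualPow.continuous hp
  unfold phiDerivDensity
  fun_prop

/-- The vertices at distance at most one from `B`. -/
def latThickening (B : Finset (Vtx N)) : Finset (Vtx N) := B ∪ B.biUnion latNeighbors

theorem subset_latThickening (B : Finset (Vtx N)) : B ⊆ latThickening B :=
  Finset.subset_union_left

theorem notMem_of_mem_latNeighbors {B : Finset (Vtx N)} {y : Vtx N} (hx : x ∉ latThickening B)
    (hy : y ∈ latNeighbors x) : y ∉ B := fun hyB =>
  hx <| Finset.mem_union_right _ <| Finset.mem_biUnion.2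
    ⟨y, hyB, mem_latNeighbors.2 (mem_latNeighbors.1 hy).symm⟩

end Densities

namespace IsNehariSystem

variable {N : ℕ} {p : ℝ} {V : Vtx N → ℝ} {f : Vtx N → ℝ → ℝ} {u v w : Vtx N → ℝ}

theorem pos (h : IsNehariSystem p V f) : 0 < p := one_pos.trans h.one_lt

theorem summable_potential_mul (h : IsNehariSystem p V f) {g : Vtx N → ℝ} (hg : Summable g) :
    Summable fun x => V x * g x := by
  obtain ⟨V₀, hV₀, hle⟩ := h.exists_pos_le
  obtain ⟨V₁, hV₁⟩ := h.exists_le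
  refine (hg.norm.mul_left V₁).of_norm_bounded fun x => ?_
  rw [norm_mul, Real.norm_of_nonneg (hV₀.le.trans (hle x))]
  exact mul_le_mul_of_nonneg_right (hV₁ x) (norm_nonneg _)

theorem summable_nonlinearity_mul (h : IsNehariSystem p V f) (hu : memE N p u)
    (hv : memE N p v) : Summable fun x => f x (u x) * v x := by
  obtain ⟨δ, hδ, hf⟩ := h.uniform_isLittleO 1 one_pos
  refine Summable.of_norm_bounded_eventually (Summable.add hu hv) ?_
  filter_upwards [hu.eventually_abs_lt h.pos hδ] with x hx
  rw [norm_mul]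
  refine (mul_le_mul_of_nonneg_right (hf x _ hx) (norm_nonneg _)).trans ?_
  rw [one_mul]
  exact rpow_sub_one_mul_le h.one_lt.le (abs_nonneg _) (abs_nonneg _)

theorem summable_Fprim (h : IsNehariSystem p V f) (hu : memE N p u) :
    Summable fun x => Fprim f x (u x) :=
  ((h.summable_nonlinearity_mul hu hu).div_const p).of_nonneg_of_le
    (fun x => (h.nonlinearity x).primitive_nonneg _)
    fun x => (h.nonlinearity x).primitive_le h.pos _

theorem summable_nehariIntegrand (h : IsNehariSystem p V f) (hu : memE N p u) :
    Summable fun x => nehariIntegrand p (f x) (u x) :=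
  ((h.summable_nonlinearity_mul hu hu).div_const p).sub (h.summable_Fprim hu)

theorem eNormP_le (h : IsNehariSystem p V f) :
    ∃ C, ∀ u, memE N p u → eNormP N p V u ≤ C * lpSum N p u := by
  obtain ⟨V₁, hV₁⟩ := h.exists_le
  refine ⟨2 ^ p * 3 ^ N + V₁, fun u hu => ?_⟩
  have hpot : ∑' x, V x * |u x| ^ p ≤ V₁ * lpSum N p u := by
    rw [lpSum, ← tsum_mul_left]
    exact (h.summable_potential_mul hu).tsum_le_tsum
      (fun x => mul_le_mul_of_nonneg_right (hV₁ x) (by positivity)) (Summable.mul_left _ hu)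
  rw [eNormP, add_mul]
  exact add_le_add (hu.pEnergy_le h.pos.le) hpot

theorem le_eNormP (h : IsNehariSystem p V f) :
    ∃ c > 0, ∀ u, memE N p u → c * lpSum N p u ≤ eNormP N p V u := by
  obtain ⟨V₀, hV₀, hle⟩ := h.exists_pos_le
  refine ⟨V₀, hV₀, fun u hu => le_add_of_nonneg_of_le (pEnergy_nonneg u) ?_⟩
  rw [lpSum, ← tsum_mul_left]
  exact (Summable.mul_left _ hu).tsum_le_tsum
    (fun x => mul_le_mul_of_nonneg_right (hle x) (by positivity)) (h.summable_potential_mul hu)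

theorem eNormP_pos (h : IsNehariSystem p V f) (hu : memE N p u) (hu₀ : u ≠ 0) :
    0 < eNormP N p V u := by
  obtain ⟨c, hc, hle⟩ := h.le_eNormP
  exact (mul_pos hc (hu.lpSum_pos hu₀)).trans_le (hle u hu)

theorem summable_phiDensity (h : IsNehariSystem p V f) (hu : memE N p u) :
    Summable (phiDensity p V f u) :=
  ((((hu.summable_sum_edge_rpow h.pos.le).mul_left _).add
    (h.summable_potential_mul hu)).mul_left _).sub (h.summable_Fprim hu)

theorem PhiFun_eq_tsum_phiDensity (h : IsNehariSystem p V f) (hu : memE N p u) :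
    PhiFun N p V f u = ∑' x, phiDensity p V f u x := by
  have hedge := (hu.summable_sum_edge_rpow h.pos.le).mul_left (1 / 2)
  have hpot := h.summable_potential_mul hu
  simp only [phiDensity]
  rw [((hedge.add hpot).mul_left _).tsum_sub (h.summable_Fprim hu), tsum_mul_left,
    hedge.tsum_add hpot, tsum_mul_left,
    ← tsum_ite_latAdj_eq (h := fun x y => |u x - u y| ^ p) (hu.summable_edge_rpow h.pos.le)]
  rfl

theorem summable_phiDerivDensity (h : IsNehariSystem p V f) (hu : memE N p u)
    (hv : memE N p v) : Summable (phiDerivDensity p V f u v) :=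
  (((hu.summable_sum_edge_dualPow_mul_sub h.one_lt hv).mul_left _).add
    (h.summable_potential_mul (hu.summable_dualPow_mul h.one_lt hv))).sub
    (h.summable_nonlinearity_mul hu hv)

theorem PhiDeriv_eq_tsum_phiDerivDensity (h : IsNehariSystem p V f) (hu : memE N p u)
    (hv : memE N p v) : PhiDeriv N p V f u v = ∑' x, phiDerivDensity p V f u v x := by
  have hedge := (hu.summable_sum_edge_dualPow_mul_sub h.one_lt hv).mul_left (1 / 2)
  have hpot := h.summable_potential_mul (hu.summable_dualPow_mul h.one_lt hv)
  simp only [phiDerivDensity]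
  rw [(hedge.add hpot).tsum_sub (h.summable_nonlinearity_mul hu hv), hedge.tsum_add hpot,
    tsum_mul_left, ← tsum_ite_latAdj_eq (h := fun x y => dualPow p (u y - u x) * (v y - v x))
      (hu.summable_edge_dualPow_mul_sub h.one_lt hv)]
  simp only [PhiDeriv, gradPair, dualPow, mul_assoc]

theorem PhiFun_sub_PhiFun (h : IsNehariSystem p V f) (hu : memE N p u) (hw : memE N p w)
    {B : Finset (Vtx N)} (huw : ∀ x ∉ B, u x = w x) :
    PhiFun N p V f u - PhiFun N p V f w =
      ∑ x ∈ latThickening B, (phiDensity p V f u x - phiDensity p V f w x) := by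
  rw [h.PhiFun_eq_tsum_phiDensity hu, h.PhiFun_eq_tsum_phiDensity hw]
  exact tsum_sub_tsum_eq_sum_of_eqOn_compl (h.summable_phiDensity hu) (h.summable_phiDensity hw)
    fun x hx => phiDensity_congr (huw x fun hxB => hx (subset_latThickening B hxB))
      fun y hy => huw y (notMem_of_mem_latNeighbors hx hy)

theorem PhiDeriv_self_sub_PhiDeriv_self (h : IsNehariSystem p V f) (hu : memE N p u)
    (hw : memE N p w) {B : Finset (Vtx N)} (huw : ∀ x ∉ B, u x = w x) :
    PhiDeriv N p V f u u - PhiDeriv N p V f w w =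
      ∑ x ∈ latThickening B, (phiDerivDensity p V f u u x - phiDerivDensity p V f w w x) := by
  rw [h.PhiDeriv_eq_tsum_phiDerivDensity hu hu, h.PhiDeriv_eq_tsum_phiDerivDensity hw hw]
  exact tsum_sub_tsum_eq_sum_of_eqOn_compl (h.summable_phiDerivDensity hu hu)
    (h.summable_phiDerivDensity hw hw)
    fun x hx => phiDerivDensity_self_congr (huw x fun hxB => hx (subset_latThickening B hxB))
      fun y hy => huw y (notMem_of_mem_latNeighbors hx hy)

theorem PhiDeriv_eq_sum (h : IsNehariSystem p V f) (hu : memE N p u) (hv : memE N p v)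
    {B : Finset (Vtx N)} (hvB : ∀ x ∉ B, v x = 0) :
    PhiDeriv N p V f u v = ∑ x ∈ latThickening B, phiDerivDensity p V f u v x := by
  rw [h.PhiDeriv_eq_tsum_phiDerivDensity hu hv]
  exact tsum_eq_sum fun x hx => phiDerivDensity_eq_zero
    (hvB x fun hxB => hx (subset_latThickening B hxB))
    fun y hy => hvB y (notMem_of_mem_latNeighbors hx hy)

theorem hasDerivAt_PhiFun (h : IsNehariSystem p V f) (hu : memE N p u) (hv : v.support.Finite)
    (θ : ℝ) :
    HasDerivAt (fun θ : ℝ => PhiFun N p V f (u + θ • v)) (PhiDeriv N p V f (u + θ • v) v) θ := by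
  set B := hv.toFinset with hB
  have hvB (x) (hx : x ∉ B) : v x = 0 := by simpa [hB] using hx
  have hvE := memE.of_finite_support h.pos.ne' hv
  have hline (θ : ℝ) : memE N p (u + θ • v) := hu.add h.pos.le (hvE.const_smul θ)
  have hlocal (θ : ℝ) : PhiFun N p V f (u + θ • v) = PhiFun N p V f u +
      ∑ x ∈ latThickening B, (phiDensity p V f (u + θ • v) x - phiDensity p V f u x) := by
    rw [← h.PhiFun_sub_PhiFun (hline θ) hu fun x hx => by simp [hvB x hx], add_sub_cancel]
  simp only [hlocal, h.PhiDeriv_eq_sum (hline θ) hvE hvB]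
  exact (HasDerivAt.fun_sum fun x _ => (hasDerivAt_phiDensity h.one_lt
    (h.nonlinearity x).continuous V u v θ).sub_const _).const_add _

theorem PhiDeriv_eq_tsum_residual_mul (h : IsNehariSystem p V f) (hu : memE N p u)
    (hv : memE N p v) :
    PhiDeriv N p V f u v =
      ∑' x, (-pLap N p u x + V x * |u x| ^ (p - 2) * u x - f x (u x)) * v x := by
  have hlap := (summable_pLap_mul h.one_lt hu hv).neg
  have hpot := h.summable_potential_mul (hu.summable_dualPow_mul h.one_lt hv)
  rw [PhiDeriv, gradPair_eq_neg_tsum_pLap_mul h.one_lt hu hv, ← tsum_neg,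
    tsum_congr fun x => show V x * |u x| ^ (p - 2) * u x * v x = V x * (dualPow p (u x) * v x) by
      rw [dualPow]; ring,
    ← hlap.tsum_add hpot, ← (hlap.add hpot).tsum_sub (h.summable_nonlinearity_mul hu hv)]
  refine tsum_congr fun x => ?_
  rw [dualPow]
  ring

theorem PhiDeriv_single (h : IsNehariSystem p V f) (hu : memE N p u) (x : Vtx N) (c : ℝ) :
    PhiDeriv N p V f u (Pi.single x c) =
      (-pLap N p u x + V x * |u x| ^ (p - 2) * u x - f x (u x)) * c := by
  rw [h.PhiDeriv_eq_tsum_residual_mul hu (memE.of_finite_support h.pos.ne'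
    ((Set.finite_singleton x).subset Pi.support_single_subset)), tsum_eq_single x]
  · rw [Pi.single_eq_same]
  · intro y hy
    rw [Pi.single_eq_of_ne hy, mul_zero]

theorem mem_Nehari_of_solution (h : IsNehariSystem p V f) (hw : memE N p w) (hw₀ : w ≠ 0)
    (hsol : ∀ x, -pLap N p w x + V x * |w x| ^ (p - 2) * w x = f x (w x)) :
    w ∈ Nehari N p V f := by
  refine ⟨hw, hw₀, ?_⟩
  simp only [h.PhiDeriv_eq_tsum_residual_mul hw hw, hsol, sub_self, zero_mul, tsum_zero]

end IsNehariSystem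

namespace IsNehariSystem

section Fibering

variable {N : ℕ} {p : ℝ} {V : Vtx N → ℝ} {f : Vtx N → ℝ → ℝ} {u w : Vtx N → ℝ} {a b t : ℝ}

theorem PhiFun_eq_tsum_nehariIntegrand (h : IsNehariSystem p V f) (hu : u ∈ Nehari N p V f) :
    PhiFun N p V f u = ∑' x, nehariIntegrand p (f x) (u x) := by
  rw [PhiFun, eNormP_eq_of_mem_Nehari h.pos.ne' hu, one_div_mul_eq_div, ← tsum_div_const]
  exact (((h.summable_nonlinearity_mul hu.1 hu.1).div_const p).tsum_sub
    (h.summable_Fprim hu.1)).symm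

theorem PhiFun_pos (h : IsNehariSystem p V f) (hu : u ∈ Nehari N p V f) :
    0 < PhiFun N p V f u := by
  obtain ⟨x, hx⟩ := Function.ne_iff.1 hu.2.1
  rw [h.PhiFun_eq_tsum_nehariIntegrand hu]
  exact (h.summable_nehariIntegrand hu.1).tsum_pos
    (fun y => (h.nonlinearity y).nehariIntegrand_nonneg h.pos _) x
    ((h.nonlinearity x).nehariIntegrand_pos h.pos hx)

theorem PhiFun_smul_le (h : IsNehariSystem p V f) (hu : u ∈ Nehari N p V f) (ht : 0 ≤ t) :
    PhiFun N p V f (t • u) ≤ PhiFun N p V f u := by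
  have hF := h.summable_Fprim hu.1
  have hFt := h.summable_Fprim (hu.1.const_smul t)
  have hfiber : p * (∑' x, Fprim f x (u x) - ∑' x, Fprim f x ((t • u) x)) ≤
      (1 - t ^ p) * ∑' x, f x (u x) * u x := by
    rw [← hF.tsum_sub hFt, ← tsum_mul_left, ← tsum_mul_left]
    exact ((hF.sub hFt).mul_left p).tsum_le_tsum
      (fun x => (h.nonlinearity x).mul_primitive_sub_primitive_le h.pos _ ht)
      ((h.summable_nonlinearity_mul hu.1 hu.1).mul_left _)
  have hmul (w : Vtx N → ℝ) :
      p * PhiFun N p V f w = eNormP N p V w - p * ∑' x, Fprim f x (w x) := by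
    rw [PhiFun, mul_sub, ← mul_assoc, mul_one_div_cancel h.pos.ne', one_mul]
  rw [← eNormP_eq_of_mem_Nehari h.pos.ne' hu] at hfiber
  refine le_of_mul_le_mul_left ?_ h.pos
  rw [hmul, hmul, eNormP_smul, abs_of_nonneg ht]
  linarith

theorem continuousOn_PhiDeriv_smul_self (h : IsNehariSystem p V f) (hu : memE N p u)
    (ha : 0 < a) :
    ContinuousOn (fun t : ℝ => PhiDeriv N p V f (t • u) (t • u)) (Set.Icc a b) := by
  simp only [PhiDeriv_smul_self h.pos.ne']
  refine ContinuousOn.sub ?_ (continuousOn_tsum (u := fun x => f x (b * u x) * (b * u x)) ?_ ?_ ?_)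
  · exact ((continuous_abs.rpow_const fun _ => Or.inr h.pos.le).mul continuous_const).continuousOn
  · intro x
    have hf := (h.nonlinearity x).continuous
    fun_prop
  · exact h.summable_nonlinearity_mul (hu.const_smul b) (hu.const_smul b)
  · intro x t ht
    rw [Real.norm_of_nonneg ((h.nonlinearity x).mul_self_nonneg _)]
    exact (h.nonlinearity x).mul_self_le_mul_self h.pos.le _ (ha.trans_le ht.1) ht.2

theorem exists_PhiDeriv_smul_self_eq_zero (h : IsNehariSystem p V f) (hu : memE N p u)
    (ha : 0 < a) (hab : a ≤ b) (hderiv_a : 0 ≤ PhiDeriv N p V f (a • u) (a • u))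
    (hderiv_b : PhiDeriv N p V f (b • u) (b • u) ≤ 0) :
    ∃ t ∈ Set.Icc a b, PhiDeriv N p V f (t • u) (t • u) = 0 :=
  intermediate_value_Icc' hab (h.continuousOn_PhiDeriv_smul_self hu ha) ⟨hderiv_b, hderiv_a⟩

theorem exists_tsum_nonlinearity_mul_le (h : IsNehariSystem p V f) :
    ∃ δ > 0, ∀ u, memE N p u → (∀ x, |u x| < δ) →
      ∑' x, f x (u x) * u x ≤ eNormP N p V u / 2 := by
  obtain ⟨c, hc, hcle⟩ := h.le_eNormP
  obtain ⟨δ, hδ, hf⟩ := h.uniform_isLittleO (c / 2) (half_pos hc)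
  refine ⟨δ, hδ, fun u hu hsmall => ?_⟩
  have hpt (x : Vtx N) : f x (u x) * u x ≤ c / 2 * |u x| ^ p := by
    refine (le_abs_self _).trans ?_
    rw [abs_mul, ← sub_add_cancel p 1, Real.rpow_add_one' (abs_nonneg _) (by linarith [h.pos]),
      ← mul_assoc]
    exact mul_le_mul_of_nonneg_right (by simpa using hf x _ (hsmall x)) (abs_nonneg _)
  have hsum := (h.summable_nonlinearity_mul hu hu).tsum_le_tsum hpt (Summable.mul_left _ hu)
  rw [tsum_mul_left] at hsum
  have hnorm : c * ∑' x, |u x| ^ p ≤ eNormP N p V u := hcle u hu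
  linarith

theorem exists_smul_mem_Nehari (h : IsNehariSystem p V f) (hw : memE N p w) (hw₀ : w ≠ 0)
    (hderiv : PhiDeriv N p V f w w ≤ 0) : ∃ t ∈ Set.Ioc (0 : ℝ) 1, t • w ∈ Nehari N p V f := by
  obtain ⟨δ, hδ, hsmall⟩ := h.exists_tsum_nonlinearity_mul_le
  obtain ⟨C, hC⟩ := hw.exists_abs_le h.pos
  obtain ⟨a, ⟨ha, ha₁⟩, haC⟩ : ∃ a ∈ Set.Ioc (0 : ℝ) 1, a * C < δ := by
    have hlim : Tendsto (fun a : ℝ => a * C) (𝓝[>] 0) (𝓝 (0 * C)) :=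
      (continuous_mul_const C).continuousAt.tendsto.mono_left nhdsWithin_le_nhds
    rw [zero_mul] at hlim
    exact (Filter.Eventually.and (Ioc_mem_nhdsGT one_pos) (hlim.eventually_lt_const hδ)).exists
  have hawE := hw.const_smul a
  have hderiv_a : 0 ≤ PhiDeriv N p V f (a • w) (a • w) := by
    have hnorm := h.eNormP_pos hawE (smul_ne_zero ha.ne' hw₀)
    have hle := hsmall (a • w) hawE fun x => by
      rw [Pi.smul_apply, smul_eq_mul, abs_mul, abs_of_pos ha]
      exact (mul_le_mul_of_nonneg_left (hC x) ha.le).trans_lt haC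
    rw [PhiDeriv_self h.pos.ne']
    linarith
  obtain ⟨t, ht, hderiv_t⟩ := h.exists_PhiDeriv_smul_self_eq_zero hw ha ha₁ hderiv_a
    (by rwa [one_smul])
  have ht₀ := ha.trans_le ht.1
  exact ⟨t, ⟨ht₀, ht.2⟩, hw.const_smul t, smul_ne_zero ht₀.ne' hw₀, hderiv_t⟩

theorem exists_mem_Nehari_PhiFun_le (h : IsNehariSystem p V f) (hw : memE N p w) (hw₀ : w ≠ 0)
    (hderiv : PhiDeriv N p V f w w ≤ 0) :
    ∃ v ∈ Nehari N p V f, PhiFun N p V f v ≤ ∑' x, nehariIntegrand p (f x) (w x) := by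
  obtain ⟨t, ⟨ht, ht₁⟩, hN⟩ := h.exists_smul_mem_Nehari hw hw₀ hderiv
  refine ⟨_, hN, ?_⟩
  rw [h.PhiFun_eq_tsum_nehariIntegrand hN]
  exact (h.summable_nehariIntegrand hN.1).tsum_le_tsum
    (fun x => (h.nonlinearity x).nehariIntegrand_mul_le h.pos _ ht ht₁)
    (h.summable_nehariIntegrand hw)

theorem exists_le_abs_of_mem_Nehari (h : IsNehariSystem p V f) :
    ∃ δ > 0, ∀ u ∈ Nehari N p V f, ∃ x, δ ≤ |u x| := by
  obtain ⟨δ, hδ, hsmall⟩ := h.exists_tsum_nonlinearity_mul_le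
  refine ⟨δ, hδ, fun u hu => ?_⟩
  by_contra! hlt
  have hle := hsmall u hu.1 hlt
  rw [← eNormP_eq_of_mem_Nehari h.pos.ne' hu] at hle
  linarith [h.eNormP_pos hu.1 hu.2.1]

end Fibering

section EulerLagrange

variable {N : ℕ} {p : ℝ} {V : Vtx N → ℝ} {f : Vtx N → ℝ → ℝ} {u v : Vtx N → ℝ} {t : ℝ}

theorem PhiDeriv_smul_self_eq_tsum (h : IsNehariSystem p V f) (hu : u ∈ Nehari N p V f)
    (ht : 0 < t) :
    PhiDeriv N p V f (t • u) (t • u) =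
      ∑' x, (t ^ p * (f x (u x) * u x) - f x (t * u x) * (t * u x)) := by
  rw [PhiDeriv_smul_self h.pos.ne', eNormP_eq_of_mem_Nehari h.pos.ne' hu, abs_of_pos ht,
    ← tsum_mul_left]
  exact (((h.summable_nonlinearity_mul hu.1 hu.1).mul_left _).tsum_sub
    (h.summable_nonlinearity_mul (hu.1.const_smul t) (hu.1.const_smul t))).symm

theorem summable_fiber_sub (h : IsNehariSystem p V f) (hu : memE N p u) (t : ℝ) :
    Summable fun x => t ^ p * (f x (u x) * u x) - f x (t * u x) * (t * u x) :=
  ((h.summable_nonlinearity_mul hu hu).mul_left _).sub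
    (h.summable_nonlinearity_mul (hu.const_smul t) (hu.const_smul t))

theorem PhiDeriv_smul_self_pos (h : IsNehariSystem p V f) (hu : u ∈ Nehari N p V f)
    (ht : 0 < t) (ht₁ : t < 1) : 0 < PhiDeriv N p V f (t • u) (t • u) := by
  obtain ⟨x, hx⟩ := Function.ne_iff.1 hu.2.1
  rw [h.PhiDeriv_smul_self_eq_tsum hu ht]
  refine (h.summable_fiber_sub hu.1 t).tsum_pos (fun y => sub_nonneg.2 ?_) x (sub_pos.2 ?_)
  · simpa [mul_comm] using (h.nonlinearity y).mul_self_mul_rpow_le (u y) ht ht₁.le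
  · simpa [mul_comm] using (h.nonlinearity x).mul_self_mul_rpow_lt hx ht ht₁

theorem PhiDeriv_smul_self_neg (h : IsNehariSystem p V f) (hu : u ∈ Nehari N p V f)
    (ht : 1 < t) : PhiDeriv N p V f (t • u) (t • u) < 0 := by
  obtain ⟨x, hx⟩ := Function.ne_iff.1 hu.2.1
  rw [h.PhiDeriv_smul_self_eq_tsum hu (one_pos.trans ht), ← neg_pos, ← tsum_neg]
  refine (h.summable_fiber_sub hu.1 t).neg.tsum_pos (fun y => ?_) x ?_
  · simpa [mul_comm] using (h.nonlinearity y).mul_self_mul_rpow_le (u y) one_pos ht.le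
  · simpa [mul_comm] using (h.nonlinearity x).mul_self_mul_rpow_lt hx one_pos ht

theorem continuous_PhiDeriv_smul_add_smul (h : IsNehariSystem p V f) (hu : memE N p u)
    (hv : v.support.Finite) :
    Continuous fun z : ℝ × ℝ => PhiDeriv N p V f (z.1 • u + z.2 • v) v := by
  have hvE := memE.of_finite_support h.pos.ne' hv
  have heq (z : ℝ × ℝ) := h.PhiDeriv_eq_sum (u := z.1 • u + z.2 • v)
    ((hu.const_smul _).add h.pos.le (hvE.const_smul _)) hvE (B := hv.toFinset) (by simp)
  simp only [heq]
  refine continuous_finsetSum _ fun x _ => ?_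
  exact (continuous_phiDerivDensity_left h.one_lt (h.nonlinearity x).continuous V v).comp
    (by fun_prop)

theorem continuous_PhiDeriv_self_add_smul (h : IsNehariSystem p V f) (hu : memE N p u)
    (hv : v.support.Finite) :
    Continuous fun s : ℝ => PhiDeriv N p V f (u + s • v) (u + s • v) := by
  have hvE := memE.of_finite_support h.pos.ne' hv
  have heq (s : ℝ) := h.PhiDeriv_self_sub_PhiDeriv_self (u := u + s • v)
    (hu.add h.pos.le (hvE.const_smul s)) hu (B := hv.toFinset) (by simp +contextual)
  simp only [sub_eq_iff_eq_add] at heq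
  simp only [heq]
  refine (continuous_finsetSum _ fun x _ => Continuous.sub ?_ continuous_const).add
    continuous_const
  exact (continuous_phiDerivDensity_self h.one_lt (h.nonlinearity x).continuous V).comp
    (by fun_prop)

theorem eventually_exists_smul_mem_Nehari (h : IsNehariSystem p V f) (hu : u ∈ Nehari N p V f)
    (hv : v.support.Finite) {η : ℝ} (hη : η ∈ Set.Ioo (0 : ℝ) 1) :
    ∀ᶠ s : ℝ in 𝓝 0, ∃ t ∈ Set.Icc (1 - η) (1 + η), t • (u + s • v) ∈ Nehari N p V f := by
  have hη₁ : 0 < 1 - η := sub_pos.2 hη.2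
  have hlim (t : ℝ) : Tendsto (fun s : ℝ => PhiDeriv N p V f (t • (u + s • v)) (t • (u + s • v)))
      (𝓝 0) (𝓝 (PhiDeriv N p V f (t • u) (t • u))) := by
    have hcont := h.continuous_PhiDeriv_self_add_smul (hu.1.const_smul t)
      (hv.subset (Function.support_const_smul_subset t v))
    simpa [smul_comm t] using hcont.tendsto 0
  filter_upwards [
    (hlim (1 - η)).eventually_const_lt (h.PhiDeriv_smul_self_pos hu hη₁ (by linarith [hη.1])),
    (hlim (1 + η)).eventually_lt_const (h.PhiDeriv_smul_self_neg hu (by linarith [hη.1]))]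
    with s hpos hneg
  have hsE : memE N p (u + s • v) :=
    hu.1.add h.pos.le ((memE.of_finite_support h.pos.ne' hv).const_smul s)
  have hs₀ : u + s • v ≠ 0 := by
    intro hs₀
    rw [hs₀, smul_zero, PhiDeriv_zero_right] at hpos
    exact hpos.false
  obtain ⟨t, ht, hderiv_t⟩ := h.exists_PhiDeriv_smul_self_eq_zero hsE hη₁ (by linarith [hη.1])
    hpos.le hneg.le
  exact ⟨t, ht, hsE.const_smul t, smul_ne_zero (hη₁.trans_le ht.1).ne' hs₀, hderiv_t⟩

theorem PhiFun_add_smul_lt (h : IsNehariSystem p V f) (hu : memE N p u) (hv : v.support.Finite)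
    (ht : 0 < t) (hneg : ∀ r ∈ Set.Ioo 0 t, PhiDeriv N p V f (u + r • v) v < 0) :
    PhiFun N p V f (u + t • v) < PhiFun N p V f u := by
  have hanti : StrictAntiOn (fun r : ℝ => PhiFun N p V f (u + r • v)) (Set.Icc 0 t) := by
    refine strictAntiOn_of_deriv_neg (convex_Icc 0 t)
      (fun r _ => (h.hasDerivAt_PhiFun hu hv r).continuousAt.continuousWithinAt) fun r hr => ?_
    rw [(h.hasDerivAt_PhiFun hu hv r).deriv]
    exact hneg r (by rwa [interior_Icc] at hr)
  simpa using hanti (Set.left_mem_Icc.2 ht.le) (Set.right_mem_Icc.2 ht.le) ht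

-- If `Φ'(u)v < 0`, a small step along `v` followed by rescaling back to the Nehari set lowers `Φ`:
-- `u` maximises `Φ` on its own ray, so the rescaling factor costs nothing.
theorem PhiDeriv_nonneg_of_isMinOn (h : IsNehariSystem p V f) (hu : u ∈ Nehari N p V f)
    (hmin : IsMinOn (PhiFun N p V f) (Nehari N p V f) u) (hv : v.support.Finite) :
    0 ≤ PhiDeriv N p V f u v := by
  by_contra! hneg
  have hnear : ∀ᶠ z : ℝ × ℝ in 𝓝 (1, 0), PhiDeriv N p V f (z.1 • u + z.2 • v) v < 0 :=
    (h.continuous_PhiDeriv_smul_add_smul hu.1 hv).continuousAt.eventually_lt_const (by simpa)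
  obtain ⟨ε, hε, hball⟩ := Metric.eventually_nhds_iff.1 hnear
  obtain ⟨η, hη, hηε⟩ : ∃ η ∈ Set.Ioo (0 : ℝ) 1, 2 * η < ε :=
    ⟨min (1 / 2) (ε / 4), ⟨by positivity, by linarith [min_le_left (1 / 2) (ε / 4)]⟩,
      by linarith [min_le_right (1 / 2) (ε / 4)]⟩
  obtain ⟨s, ⟨t, ht, hN⟩, hs⟩ := (((h.eventually_exists_smul_mem_Nehari hu hv hη).filter_mono
    nhdsWithin_le_nhds).and (Ioc_mem_nhdsGT hη.1)).exists
  have ht₀ : 0 < t := by linarith [ht.1, hη.2]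
  have hstep : PhiFun N p V f (t • u + (t * s) • v) < PhiFun N p V f (t • u) := by
    refine h.PhiFun_add_smul_lt (hu.1.const_smul t) hv (mul_pos ht₀ hs.1) fun r hr => ?_
    have hr₂ : r < 2 * η := by nlinarith [hr.2, hs.1, hs.2, ht.2, hη.2]
    refine hball (y := (t, r)) (max_lt ?_ ?_) <;> rw [Real.dist_eq, abs_lt] <;>
      constructor <;> dsimp only <;> linarith [ht.1, ht.2, hr.1, hη.1]
  have hle : PhiFun N p V f u ≤ PhiFun N p V f (t • u + (t * s) • v) := by
    rw [← smul_smul, ← smul_add]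
    exact isMinOn_iff.1 hmin _ hN
  exact (hle.trans_lt (hstep.trans_le (h.PhiFun_smul_le hu ht₀.le))).false

theorem solution_of_isMinOn (h : IsNehariSystem p V f) (hu : u ∈ Nehari N p V f)
    (hmin : IsMinOn (PhiFun N p V f) (Nehari N p V f) u) (x : Vtx N) :
    -pLap N p u x + V x * |u x| ^ (p - 2) * u x = f x (u x) := by
  set r := -pLap N p u x + V x * |u x| ^ (p - 2) * u x - f x (u x) with hr
  have hnonneg : 0 ≤ r * -r := by
    rw [hr, ← h.PhiDeriv_single hu.1]
    exact h.PhiDeriv_nonneg_of_isMinOn hu hmin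
      ((Set.finite_singleton x).subset Pi.support_single_subset)
  refine sub_eq_zero.1 (mul_self_eq_zero.1 (le_antisymm ?_ (mul_self_nonneg r)))
  linarith

end EulerLagrange

end IsNehariSystem

/-- `F(x,t) / |t|^p → ∞` as `|t| → ∞`, uniformly in `x`, where `F(x,·)` is the primitive of
`f x`. -/
def HasSuperpowerPrimitive {N : ℕ} (p : ℝ) (f : Vtx N → ℝ → ℝ) : Prop :=
  ∀ M : ℝ, ∃ R > (0 : ℝ), ∀ x t, R ≤ |t| → M ≤ Fprim f x t / |t| ^ p

namespace IsNehariSystem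

variable {N : ℕ} {p : ℝ} {V : Vtx N → ℝ} {f : Vtx N → ℝ → ℝ}

theorem exists_pos_smul_mem_Nehari (h : IsNehariSystem p V f) (hF : HasSuperpowerPrimitive p f)
    {w : Vtx N → ℝ} (hw : memE N p w) (hw₀ : w ≠ 0) : ∃ t > (0 : ℝ), t • w ∈ Nehari N p V f := by
  obtain ⟨x, hx⟩ := Function.ne_iff.1 hw₀
  have hwx : 0 < |w x| ^ p := Real.rpow_pos_of_pos (abs_pos.2 hx) p
  obtain ⟨R, hR, hFR⟩ := hF (eNormP N p V w / |w x| ^ p)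
  set s := R / |w x|
  have hs : 0 < s := div_pos hR (abs_pos.2 hx)
  have hsE := hw.const_smul s
  have hsx : |s * w x| = R := by
    rw [abs_mul, abs_of_pos hs, div_mul_cancel₀ _ (abs_pos.2 hx).ne']
  have hderiv : PhiDeriv N p V f (s • w) (s • w) ≤ 0 := by
    have hgrowth : |s| ^ p * eNormP N p V w ≤ Fprim f x (s * w x) := by
      have hquot := hFR x (s * w x) hsx.ge
      rw [le_div_iff₀ (by rw [hsx]; positivity), abs_mul,
        Real.mul_rpow (abs_nonneg _) (abs_nonneg _)] at hquot
      calc |s| ^ p * eNormP N p V w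
          = eNormP N p V w / |w x| ^ p * (|s| ^ p * |w x| ^ p) := by field_simp
        _ ≤ Fprim f x (s * w x) := hquot
    have hprim : Fprim f x (s * w x) ≤ f x (s * w x) * (s * w x) :=
      ((h.nonlinearity x).primitive_le h.pos _).trans
        (div_le_self ((h.nonlinearity x).mul_self_nonneg _) h.one_lt.le)
    have hterm := (h.summable_nonlinearity_mul hsE hsE).le_tsum x
      fun y _ => (h.nonlinearity y).mul_self_nonneg _
    rw [PhiDeriv_self h.pos.ne', eNormP_smul]
    exact sub_nonpos.2 (hgrowth.trans (hprim.trans hterm))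
  obtain ⟨t, ⟨ht, -⟩, hN⟩ := h.exists_smul_mem_Nehari hsE (smul_ne_zero hs.ne' hw₀) hderiv
  exact ⟨t * s, mul_pos ht hs, by rwa [mul_smul]⟩

theorem exists_eNormP_div_le_PhiFun (h : IsNehariSystem p V f) :
    ∃ δ > 0, ∀ u, memE N p u → (∀ x, |u x| < δ) → eNormP N p V u / (2 * p) ≤ PhiFun N p V f u := by
  obtain ⟨δ, hδ, hsmall⟩ := h.exists_tsum_nonlinearity_mul_le
  refine ⟨δ, hδ, fun u hu hlt => ?_⟩
  have hprim : ∑' x, Fprim f x (u x) ≤ (∑' x, f x (u x) * u x) / p := by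
    rw [← tsum_div_const]
    exact (h.summable_Fprim hu).tsum_le_tsum (fun x => (h.nonlinearity x).primitive_le h.pos _)
      ((h.summable_nonlinearity_mul hu hu).div_const p)
  have hhalf := div_le_div_of_nonneg_right (hsmall u hu hlt) h.pos.le
  calc eNormP N p V u / (2 * p) = 1 / p * eNormP N p V u - eNormP N p V u / 2 / p := by
        field_simp
        ring
    _ ≤ PhiFun N p V f u := sub_le_sub_left (hprim.trans hhalf) _

-- Rescale `u` so that `‖u‖^p` equals a large constant: were all values then below `δ`, `Φ` would
-- exceed `K` on the ray of `u`, on which `u` is the maximum.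
theorem exists_eNormP_le_mul_abs_rpow (h : IsNehariSystem p V f) (K : ℝ) :
    ∃ C, ∀ u ∈ Nehari N p V f, PhiFun N p V f u ≤ K → ∃ x, eNormP N p V u ≤ C * |u x| ^ p := by
  obtain ⟨δ, hδ, hsmall⟩ := h.exists_eNormP_div_le_PhiFun
  have hp := h.pos
  set A := 2 * p * (|K| + 1) with hA
  refine ⟨A / δ ^ p, fun u hu hK => ?_⟩
  set J := eNormP N p V u with hJ
  have hJ₀ : 0 < J := h.eNormP_pos hu.1 hu.2.1
  set τ := (A / J) ^ p⁻¹
  have hτ₀ : 0 ≤ τ := by positivity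
  have hτp : τ ^ p = A / J := Real.rpow_inv_rpow (by positivity) hp.ne'
  obtain ⟨x, hx⟩ : ∃ x, δ ≤ |(τ • u) x| := by
    by_contra! hlt
    have hlow := hsmall (τ • u) (hu.1.const_smul τ) hlt
    have hval : |τ| ^ p * J / (2 * p) = |K| + 1 := by
      rw [abs_of_nonneg hτ₀, hτp, hA]
      field_simp
    rw [eNormP_smul, ← hJ, hval] at hlow
    linarith [h.PhiFun_smul_le hu hτ₀, le_abs_self K]
  refine ⟨x, ?_⟩
  have hpow : δ ^ p ≤ A / J * |u x| ^ p := by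
    rw [← hτp, ← Real.mul_rpow hτ₀ (abs_nonneg _), ← abs_of_nonneg hτ₀, ← abs_mul]
    exact Real.rpow_le_rpow hδ.le hx hp.le
  rw [div_mul_eq_mul_div, le_div_iff₀ (by positivity)] at hpow ⊢
  linarith

theorem exists_abs_lt_of_eNormP_le (h : IsNehariSystem p V f) (hF : HasSuperpowerPrimitive p f)
    (C : ℝ) :
    ∃ R > 0, ∀ u ∈ Nehari N p V f, ∀ x, eNormP N p V u ≤ C * |u x| ^ p → |u x| < R := by
  obtain ⟨R, hR, hFR⟩ := hF C
  refine ⟨R, hR, fun u hu x hle => ?_⟩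
  by_contra! hRx
  have hgrowth : C * |u x| ^ p ≤ Fprim f x (u x) :=
    (le_div_iff₀ (Real.rpow_pos_of_pos (hR.trans_le hRx) p)).1 (hFR x (u x) hRx)
  have hterm : Fprim f x (u x) ≤ ∑' y, Fprim f y (u y) :=
    (h.summable_Fprim hu.1).le_tsum x fun y _ => (h.nonlinearity y).primitive_nonneg _
  have hnorm : 1 / p * eNormP N p V u ≤ eNormP N p V u :=
    mul_le_of_le_one_left (h.eNormP_pos hu.1 hu.2.1).le
      ((div_le_one h.pos).2 h.one_lt.le)
  have hpos := h.PhiFun_pos hu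
  rw [PhiFun] at hpos
  linarith

theorem exists_lpSum_le_of_PhiFun_le (h : IsNehariSystem p V f) (hF : HasSuperpowerPrimitive p f)
    (K : ℝ) : ∃ C, ∀ u ∈ Nehari N p V f, PhiFun N p V f u ≤ K → lpSum N p u ≤ C := by
  obtain ⟨c, hc, hcle⟩ := h.le_eNormP
  obtain ⟨A, hA⟩ := h.exists_eNormP_le_mul_abs_rpow K
  obtain ⟨R, -, hlt⟩ := h.exists_abs_lt_of_eNormP_le hF A
  refine ⟨|A| * R ^ p / c, fun u hu hK => ?_⟩
  obtain ⟨x, hx⟩ := hA u hu hK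
  rw [le_div_iff₀' hc]
  calc c * lpSum N p u ≤ eNormP N p V u := hcle u hu.1
    _ ≤ A * |u x| ^ p := hx
    _ ≤ |A| * R ^ p := mul_le_mul (le_abs_self A)
        (Real.rpow_le_rpow (abs_nonneg _) (hlt u hu x hx).le h.pos.le)
        (by positivity) (abs_nonneg A)

end IsNehariSystem

section Translation

variable {N : ℕ} {p : ℝ} {V : Vtx N → ℝ} {f : Vtx N → ℝ → ℝ} {u : Vtx N → ℝ} {c : Vtx N}

theorem memE.comp_add_right (hu : memE N p u) (c : Vtx N) : memE N p fun x => u (x + c) :=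
  (Equiv.addRight c).summable_iff.2 hu

theorem tsum_comp_add_right_of_periodic {g : Vtx N → ℝ → ℝ} (hg : Function.Periodic g c)
    (u : Vtx N → ℝ) : ∑' x, g x (u (x + c)) = ∑' x, g x (u x) := by
  rw [← (Equiv.addRight c).tsum_eq fun x => g x (u x)]
  exact tsum_congr fun x => by rw [Equiv.coe_addRight, hg x]

theorem pEnergy_comp_add_right (u : Vtx N → ℝ) (c : Vtx N) :
    pEnergy N p (fun x => u (x + c)) = pEnergy N p u := by
  rw [pEnergy, pEnergy, ← ((Equiv.addRight c).prodCongr (Equiv.addRight c)).tsum_eq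
    fun z => if LatAdj z.1 z.2 then |u z.1 - u z.2| ^ p else 0]
  simp [LatAdj.add_right_iff]

theorem eNormP_comp_add_right (hV : Function.Periodic V c) (u : Vtx N → ℝ) :
    eNormP N p V (fun x => u (x + c)) = eNormP N p V u := by
  rw [eNormP, eNormP, pEnergy_comp_add_right]
  exact congrArg _ (tsum_comp_add_right_of_periodic (g := fun x t => V x * |t| ^ p)
    (fun x => funext fun t => by simp only [hV x]) u)

theorem PhiFun_comp_add_right (hV : Function.Periodic V c) (hf : Function.Periodic f c)
    (u : Vtx N → ℝ) : PhiFun N p V f (fun x => u (x + c)) = PhiFun N p V f u := by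
  rw [PhiFun, PhiFun, eNormP_comp_add_right hV,
    tsum_comp_add_right_of_periodic (g := Fprim f) fun x => funext fun t => by
      rw [Fprim, Fprim, hf x]]

theorem comp_add_right_mem_Nehari (hp : p ≠ 0) (hV : Function.Periodic V c)
    (hf : Function.Periodic f c) (hu : u ∈ Nehari N p V f) :
    (fun x => u (x + c)) ∈ Nehari N p V f := by
  obtain ⟨huE, hu₀, hderiv⟩ := hu
  refine ⟨huE.comp_add_right c, fun h₀ => hu₀ (funext fun x => ?_), ?_⟩
  · simpa using congrFun h₀ (x - c)
  · rw [PhiDeriv_self hp] at hderiv ⊢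
    rw [eNormP_comp_add_right hV, tsum_comp_add_right_of_periodic (g := fun x t => f x t * t)
      fun x => funext fun t => by simp only [hf x], hderiv]

end Translation

theorem memE.exists_subseq_tendsto {N : ℕ} {p C : ℝ} (hp : 0 < p) {U : ℕ → Vtx N → ℝ}
    (hU : ∀ n, memE N p (U n)) (hC : ∀ n, lpSum N p (U n) ≤ C) :
    ∃ u, memE N p u ∧ ∃ φ : ℕ → ℕ, StrictMono φ ∧ Tendsto (U ∘ φ) atTop (𝓝 u) := by
  have hcompact : IsCompact (Set.univ.pi fun _ : Vtx N => Set.Icc (-(C ^ p⁻¹)) (C ^ p⁻¹)) :=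
    isCompact_univ_pi fun _ => isCompact_Icc
  have hbound (n : ℕ) (x : Vtx N) : |U n x| ≤ C ^ p⁻¹ := by
    have hle := ((hU n).abs_rpow_le_lpSum x).trans (hC n)
    exact (Real.le_rpow_inv_iff_of_pos (abs_nonneg _)
      (le_trans (by positivity) hle) hp).2 hle
  obtain ⟨u, -, φ, hφ, hlim⟩ := hcompact.tendsto_subseq fun n x _ => abs_le.1 (hbound n x)
  refine ⟨u, ?_, φ, hφ, hlim⟩
  exact (summable_and_tsum_le_of_tendsto (fun n x => by positivity) (fun n => hU (φ n))
    (fun x => (tendsto_pi_nhds.1 hlim x).abs.rpow_const (Or.inr hp.le)) (fun n => hC (φ n))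
    tendsto_const_nhds).1

section Cutoff

theorem tsum_apply_indicator_compl {ι : Type*} {g : ι → ℝ → ℝ} (hg₀ : ∀ i, g i 0 = 0) {u : ι → ℝ}
    (hs : Summable fun i => g i (u i)) (B : Finset ι) :
    ∑' i, g i ((B : Set ι)ᶜ.indicator u i) = ∑' i, g i (u i) - ∑ i ∈ B, g i (u i) := by
  have happly (i : ι) : g i ((B : Set ι)ᶜ.indicator u i) =
      (B : Set ι)ᶜ.indicator (fun j => g j (u j)) i := by
    by_cases hi : i ∈ B <;> simp [hi, hg₀]
  rw [tsum_congr happly, ← tsum_subtype, ← hs.sum_add_tsum_compl (s := B), add_sub_cancel_left]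

variable {N : ℕ} {p : ℝ} {V : Vtx N → ℝ} {f : Vtx N → ℝ → ℝ} {u : Vtx N → ℝ}

theorem memE.indicator (hp : 0 ≤ p) (hu : memE N p u) (s : Set (Vtx N)) :
    memE N p (s.indicator u) :=
  hu.of_abs_le hp fun x => norm_indicator_le_norm_self u x

theorem memE.tendsto_lpSum_indicator_compl (hp : p ≠ 0) (hu : memE N p u) :
    Tendsto (fun B : Finset (Vtx N) => lpSum N p ((B : Set (Vtx N))ᶜ.indicator u)) atTop
      (𝓝 0) := by
  have hlp (B : Finset (Vtx N)) := tsum_apply_indicator_compl (g := fun _ t => |t| ^ p)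
    (fun _ => by simp [hp]) hu B
  simp only [lpSum, hlp]
  simpa using (Summable.hasSum hu).const_sub (∑' x, |u x| ^ p)

namespace IsNehariSystem

theorem PhiDeriv_self_le_eNormP (h : IsNehariSystem p V f) (u : Vtx N → ℝ) :
    PhiDeriv N p V f u u ≤ eNormP N p V u := by
  rw [PhiDeriv_self h.pos.ne']
  exact sub_le_self _ (tsum_nonneg fun x => (h.nonlinearity x).mul_self_nonneg _)

theorem exists_finset_PhiDeriv_indicator_compl_lt (h : IsNehariSystem p V f) (hu : memE N p u)
    (x : Vtx N) {ε : ℝ} (hε : 0 < ε) :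
    ∃ B : Finset (Vtx N), x ∈ B ∧
      PhiDeriv N p V f ((B : Set (Vtx N))ᶜ.indicator u) ((B : Set (Vtx N))ᶜ.indicator u) < ε := by
  obtain ⟨C, hC⟩ := h.eNormP_le
  have hlim := (hu.tendsto_lpSum_indicator_compl h.pos.ne').const_mul C
  rw [mul_zero] at hlim
  obtain ⟨B, hlt, hxB⟩ :=
    ((hlim.eventually_lt_const hε).and (eventually_ge_atTop ({x} : Finset (Vtx N)))).exists
  exact ⟨B, by simpa using hxB, (h.PhiDeriv_self_le_eNormP _).trans_lt
    ((hC _ (hu.indicator h.pos.le _)).trans_lt hlt)⟩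

theorem tendsto_PhiDeriv_sub_indicator_compl (h : IsNehariSystem p V f) {U : ℕ → Vtx N → ℝ}
    (hU : ∀ n, memE N p (U n)) (hu : memE N p u) (hlim : Tendsto U atTop (𝓝 u))
    (B : Finset (Vtx N)) :
    Tendsto (fun n => PhiDeriv N p V f (U n) (U n) -
        PhiDeriv N p V f ((B : Set (Vtx N))ᶜ.indicator (U n)) ((B : Set (Vtx N))ᶜ.indicator (U n)))
      atTop (𝓝 (PhiDeriv N p V f u u -
        PhiDeriv N p V f ((B : Set (Vtx N))ᶜ.indicator u) ((B : Set (Vtx N))ᶜ.indicator u))) := by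
  have hcut : Continuous fun w : Vtx N → ℝ => (B : Set (Vtx N))ᶜ.indicator w :=
    continuous_pi fun x => by
      by_cases hx : x ∈ B <;> simp only [Set.indicator, Set.mem_compl_iff, Finset.mem_coe, hx,
        not_true_eq_false, not_false_eq_true, if_true, if_false] <;> fun_prop
  have heq {w : Vtx N → ℝ} (hw : memE N p w) := h.PhiDeriv_self_sub_PhiDeriv_self hw
    (hw.indicator h.pos.le (B : Set (Vtx N))ᶜ) (B := B)
    fun x hx => (Set.indicator_of_mem (s := (B : Set (Vtx N))ᶜ) hx w).symm
  have hcont : Continuous fun w : Vtx N → ℝ => ∑ x ∈ latThickening B,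
      (phiDerivDensity p V f w w x - phiDerivDensity p V f ((B : Set (Vtx N))ᶜ.indicator w)
        ((B : Set (Vtx N))ᶜ.indicator w) x) :=
    continuous_finsetSum _ fun x _ => by
      have hx := continuous_phiDerivDensity_self h.one_lt (h.nonlinearity x).continuous V
      exact hx.sub (hx.comp hcut)
  simp only [heq hu, fun n => heq (hU n)]
  exact (hcont.tendsto u).comp hlim

-- If `Φ'(u)u > 0`, cutting a large finite set out of `U n` leaves `Φ'` negative on the remainder
-- while strictly lowering the limit of `Φ`; projecting the remainder onto the Nehari set then
-- drops below the level `c`.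
theorem PhiDeriv_self_nonpos_of_tendsto (h : IsNehariSystem p V f) {U : ℕ → Vtx N → ℝ} {c : ℝ}
    (hU : ∀ n, U n ∈ Nehari N p V f) (hc : c ∈ lowerBounds (PhiFun N p V f '' Nehari N p V f))
    (hΦ : Tendsto (fun n => PhiFun N p V f (U n)) atTop (𝓝 c)) (hu : memE N p u) (hu₀ : u ≠ 0)
    (hlim : Tendsto U atTop (𝓝 u)) : PhiDeriv N p V f u u ≤ 0 := by
  by_contra! hpos
  obtain ⟨x, hx⟩ := Function.ne_iff.1 hu₀
  obtain ⟨B, hxB, hcut⟩ := h.exists_finset_PhiDeriv_indicator_compl_lt hu x hpos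
  set W : ℕ → Vtx N → ℝ := fun n => (B : Set (Vtx N))ᶜ.indicator (U n)
  have hWE (n : ℕ) : memE N p (W n) := (hU n).1.indicator h.pos.le _
  have hderiv : ∀ᶠ n in atTop, PhiDeriv N p V f (W n) (W n) < 0 := by
    filter_upwards [(h.tendsto_PhiDeriv_sub_indicator_compl (fun n => (hU n).1) hu hlim B
      ).eventually_const_lt (sub_pos.2 hcut)] with n hn
    rwa [(hU n).2.2, zero_sub, neg_pos] at hn
  have hlevel : ∀ᶠ n in atTop, ∑' x, nehariIntegrand p (f x) (W n x) < c := by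
    have hlimB : Tendsto (fun n => ∑ x ∈ B, nehariIntegrand p (f x) (U n x)) atTop
        (𝓝 (∑ x ∈ B, nehariIntegrand p (f x) (u x))) :=
      tendsto_finsetSum B fun x _ => ((h.nonlinearity x).continuous_nehariIntegrand.tendsto
        (u x)).comp (tendsto_pi_nhds.1 hlim x)
    have hBpos : 0 < ∑ x ∈ B, nehariIntegrand p (f x) (u x) :=
      Finset.sum_pos' (fun y _ => (h.nonlinearity y).nehariIntegrand_nonneg h.pos _)
        ⟨x, hxB, (h.nonlinearity x).nehariIntegrand_pos h.pos hx⟩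
    filter_upwards [(hΦ.sub hlimB).eventually_lt_const (sub_lt_self c hBpos)] with n hn
    rwa [tsum_apply_indicator_compl (fun _ => nehariIntegrand_zero ..)
      (h.summable_nehariIntegrand (hU n).1), ← h.PhiFun_eq_tsum_nehariIntegrand (hU n)]
  obtain ⟨n, hn, hlt⟩ := (hderiv.and hlevel).exists
  have hW₀ : W n ≠ 0 := by
    intro hW₀
    rw [hW₀, PhiDeriv_zero_right] at hn
    exact hn.false
  obtain ⟨v, hv, hle⟩ := h.exists_mem_Nehari_PhiFun_le (hWE n) hW₀ hn.le
  exact ((hle.trans_lt hlt).trans_le (hc ⟨v, hv, rfl⟩)).false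

theorem exists_mem_Nehari_PhiFun_le_of_tendsto (h : IsNehariSystem p V f) {U : ℕ → Vtx N → ℝ}
    {c : ℝ} (hU : ∀ n, U n ∈ Nehari N p V f)
    (hc : c ∈ lowerBounds (PhiFun N p V f '' Nehari N p V f))
    (hΦ : Tendsto (fun n => PhiFun N p V f (U n)) atTop (𝓝 c)) (hu : memE N p u) (hu₀ : u ≠ 0)
    (hlim : Tendsto U atTop (𝓝 u)) : ∃ v ∈ Nehari N p V f, PhiFun N p V f v ≤ c := by
  obtain ⟨v, hv, hle⟩ := h.exists_mem_Nehari_PhiFun_le hu hu₀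
    (h.PhiDeriv_self_nonpos_of_tendsto hU hc hΦ hu hu₀ hlim)
  refine ⟨v, hv, hle.trans (summable_and_tsum_le_of_tendsto
    (fun n x => (h.nonlinearity x).nehariIntegrand_nonneg h.pos (U n x))
    (fun n => h.summable_nehariIntegrand (hU n).1)
    (fun x => ((h.nonlinearity x).continuous_nehariIntegrand.tendsto (u x)).comp
      (tendsto_pi_nhds.1 hlim x))
    (fun n => (h.PhiFun_eq_tsum_nehariIntegrand (hU n)).ge) hΦ).2⟩

end IsNehariSystem

end Cutoff

section Existence

variable {N : ℕ} {p : ℝ} {V : Vtx N → ℝ} {f : Vtx N → ℝ → ℝ} {T : ℤ}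

namespace IsNehariSystem

theorem exists_translate_mem_Nehari (h : IsNehariSystem p V f) (hT : 0 < T)
    (hV : ∀ k : Vtx N, Function.Periodic V (T • k))
    (hf : ∀ k : Vtx N, Function.Periodic f (T • k)) :
    ∃ δ > 0, ∀ u ∈ Nehari N p V f, ∃ w ∈ Nehari N p V f, PhiFun N p V f w = PhiFun N p V f u ∧
      ∃ x ∈ Set.Icc (0 : Vtx N) fun _ => T, δ ≤ |w x| := by
  obtain ⟨δ, hδ, hle⟩ := h.exists_le_abs_of_mem_Nehari
  refine ⟨δ, hδ, fun u hu => ?_⟩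
  obtain ⟨x, hx⟩ := hle u hu
  obtain ⟨k, hk⟩ := exists_add_zsmul_mem_Icc hT x
  refine ⟨fun y => u (y + T • -k), comp_add_right_mem_Nehari h.pos.ne' (hV _) (hf _) hu,
    PhiFun_comp_add_right (hV _) (hf _) u, _, hk, ?_⟩
  simpa only [smul_neg, add_neg_cancel_right] using hx

theorem exists_minimizing_seq_tendsto (h : IsNehariSystem p V f) (hF : HasSuperpowerPrimitive p f)
    (hT : 0 < T) (hV : ∀ k : Vtx N, Function.Periodic V (T • k))
    (hf : ∀ k : Vtx N, Function.Periodic f (T • k)) :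
    ∃ U : ℕ → Vtx N → ℝ, (∀ n, U n ∈ Nehari N p V f) ∧
      Tendsto (fun n => PhiFun N p V f (U n)) atTop (𝓝 (sInf (PhiFun N p V f '' Nehari N p V f))) ∧
      ∃ u, memE N p u ∧ u ≠ 0 ∧ Tendsto U atTop (𝓝 u) := by
  obtain ⟨_, -, hN⟩ := h.exists_pos_smul_mem_Nehari hF (w := Pi.single 0 1)
    (memE.of_finite_support h.pos.ne' ((Set.finite_singleton 0).subset Pi.support_single_subset))
    (by simp)
  obtain ⟨y, -, hy, hyN⟩ := exists_seq_tendsto_sInf (Set.Nonempty.image (PhiFun N p V f) ⟨_, hN⟩)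
    ⟨0, Set.forall_mem_image.2 fun u hu => (h.PhiFun_pos hu).le⟩
  obtain ⟨δ, hδ, htranslate⟩ := h.exists_translate_mem_Nehari hT hV hf
  have hseq (n : ℕ) : ∃ w ∈ Nehari N p V f, PhiFun N p V f w = y n ∧
      ∃ x ∈ Set.Icc (0 : Vtx N) fun _ => T, δ ≤ |w x| := by
    obtain ⟨u, hu, hun⟩ := hyN n
    exact hun ▸ htranslate u hu
  choose U hUN hUy hUδ using hseq
  obtain ⟨K, hK⟩ := hy.bddAbove_range
  obtain ⟨C, hC⟩ := h.exists_lpSum_le_of_PhiFun_le hF K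
  obtain ⟨u, hu, φ, hφ, hlim⟩ := memE.exists_subseq_tendsto h.pos (fun n => (hUN n).1)
    fun n => hC _ (hUN n) ((hUy n).trans_le (hK ⟨n, rfl⟩))
  refine ⟨U ∘ φ, fun n => hUN (φ n), ?_, u, hu, ?_, hlim⟩
  · simp only [Function.comp_apply, hUy]
    exact hy.comp hφ.tendsto_atTop
  · rintro rfl
    have hsmall : ∀ᶠ n in atTop, ∀ x ∈ Set.Icc (0 : Vtx N) fun _ => T, |U (φ n) x| < δ :=
      (Set.finite_Icc _ _).eventually_all.2 fun x _ =>
        (tendsto_pi_nhds.1 hlim x).abs.eventually_lt_const (by simpa using hδ)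
    obtain ⟨n, hn⟩ := hsmall.exists
    obtain ⟨x, hx, hle⟩ := hUδ (φ n)
    exact (hn x hx).not_ge hle

theorem exists_isMinOn_PhiFun_Nehari (h : IsNehariSystem p V f) (hF : HasSuperpowerPrimitive p f)
    (hT : 0 < T) (hV : ∀ k : Vtx N, Function.Periodic V (T • k))
    (hf : ∀ k : Vtx N, Function.Periodic f (T • k)) :
    ∃ u ∈ Nehari N p V f, IsMinOn (PhiFun N p V f) (Nehari N p V f) u := by
  obtain ⟨U, hU, hΦ, u, hu, hu₀, hlim⟩ := h.exists_minimizing_seq_tendsto hF hT hV hf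
  have hbdd : BddBelow (PhiFun N p V f '' Nehari N p V f) :=
    ⟨0, Set.forall_mem_image.2 fun v hv => (h.PhiFun_pos hv).le⟩
  have hc := (isGLB_csInf (Set.Nonempty.image _ ⟨U 0, hU 0⟩) hbdd).1
  obtain ⟨v, hv, hle⟩ := h.exists_mem_Nehari_PhiFun_le_of_tendsto hU hc hΦ hu hu₀ hlim
  exact ⟨v, hv, isMinOn_iff.2 fun w hw => hle.trans (hc ⟨w, hw, rfl⟩)⟩

end IsNehariSystem

theorem IsNehariSystem.of_periodic (hp : 1 < p) (hT : 0 < T)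
    (hV : ∀ k : Vtx N, Function.Periodic V (T • k)) (hV₀ : ∀ x, 0 < V x)
    (hfc : ∀ x, Continuous (f x))
    (hf₀ : ∀ ε > 0, ∃ δ > 0, ∀ x t, |t| < δ → |f x t| ≤ ε * |t| ^ (p - 1))
    (hmono : ∀ x, StrictMonoOn (fun t => f x t / |t| ^ (p - 1)) (Set.Iio 0) ∧
      StrictMonoOn (fun t => f x t / |t| ^ (p - 1)) (Set.Ioi 0)) :
    IsNehariSystem p V f where
  one_lt := hp
  exists_pos_le := by
    obtain ⟨_, ⟨x, rfl⟩, hle⟩ := Set.exists_min_image (Set.range V) id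
      (finite_range_of_periodic hT hV) (Set.range_nonempty V)
    exact ⟨V x, hV₀ x, fun y => hle _ ⟨y, rfl⟩⟩
  exists_le := by
    obtain ⟨M, hM⟩ := (finite_range_of_periodic hT hV).bddAbove
    exact ⟨M, fun x => hM ⟨x, rfl⟩⟩
  nonlinearity x :=
    { continuous := hfc x
      isLittleO := Asymptotics.isLittleO_iff.2 fun ε hε => by
        obtain ⟨δ, hδ, hle⟩ := hf₀ ε hε
        filter_upwards [Metric.ball_mem_nhds 0 hδ] with t ht
        rw [Real.norm_eq_abs, Real.norm_of_nonneg (by positivity)]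
        exact hle x t (by simpa using ht)
      strictMonoOn_Iio := (hmono x).1
      strictMonoOn_Ioi := (hmono x).2 }
  uniform_isLittleO := hf₀

end Existence

theorem stmt_17_general (N : ℕ) (p : ℝ) (hp : 1 < p)
    (V : Vtx N → ℝ) (f : Vtx N → ℝ → ℝ) (T : ℕ) (hT : 0 < T)
    (hfc : ∀ x, Continuous (f x))
    (hA2V : ∀ x (i : Fin N), V (x + (T : ℤ) • Pi.single i 1) = V x)
    (hA2f : ∀ x (i : Fin N) (u : ℝ), f (x + (T : ℤ) • Pi.single i 1) u = f x u)
    (hVpos : ∀ x, 0 < V x)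
    (hA3 : ∀ ε > (0 : ℝ), ∃ δ > (0 : ℝ), ∀ x u, |u| < δ → |f x u| ≤ ε * |u| ^ (p - 1))
    (hA4 : ∀ x, StrictMonoOn (fun u => f x u / |u| ^ (p - 1)) (Set.Iio 0) ∧
               StrictMonoOn (fun u => f x u / |u| ^ (p - 1)) (Set.Ioi 0))
    (hA5 : ∀ M : ℝ, ∃ R > (0 : ℝ), ∀ x u, R ≤ |u| → M ≤ Fprim f x u / |u| ^ p) :
    (∃ u ∈ Nehari N p V f,
        (∀ v ∈ Nehari N p V f, PhiFun N p V f u ≤ PhiFun N p V f v) ∧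
        0 < PhiFun N p V f u) ∧
    (∀ u ∈ Nehari N p V f,
      (∀ v ∈ Nehari N p V f, PhiFun N p V f u ≤ PhiFun N p V f v) →
        ((∀ x, -pLap N p u x + V x * |u x| ^ (p - 2) * u x = f x (u x)) ∧
         u ≠ 0 ∧
         (∀ w : Vtx N → ℝ, memE N p w → w ≠ 0 →
            (∀ x, -pLap N p w x + V x * |w x| ^ (p - 2) * w x = f x (w x)) →
            PhiFun N p V f u ≤ PhiFun N p V f w))) := by
  have hTℤ : 0 < (T : ℤ) := Int.natCast_pos.2 hT
  have hV := periodic_zsmul_of_forall_single hA2V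
  have hf := periodic_zsmul_of_forall_single fun x i => funext (hA2f x i)
  have h := IsNehariSystem.of_periodic hp hTℤ hV hVpos hfc hA3 hA4
  constructor
  · obtain ⟨u, hu, hmin⟩ := h.exists_isMinOn_PhiFun_Nehari hA5 hTℤ hV hf
    exact ⟨u, hu, isMinOn_iff.1 hmin, h.PhiFun_pos hu⟩
  · intro u hu hmin
    exact ⟨h.solution_of_isMinOn hu (isMinOn_iff.2 hmin), hu.2.1, fun w hw hw₀ hsol =>
      hmin w (h.mem_Nehari_of_solution hw hw₀ hsol)⟩

/-- Main theorem: the Nehari level is positive and attained, and every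
minimizer on the Nehari manifold is a ground state solution of the p-Laplacian
equation on the lattice graph. -/
theorem stmt_17 (N : ℕ) (p q : ℝ) (hp : 1 < p) (hq : p < q)
    (V : Vtx N → ℝ) (f : Vtx N → ℝ → ℝ) (T : ℕ) (hT : 0 < T)
    (hA1 : ∃ a : ℝ, 0 < a ∧ ∀ x u, |f x u| ≤ a * (1 + |u| ^ (q - 1)))
    (hfc : ∀ x, Continuous (f x))
    (hA2V : ∀ x (i : Fin N), V (x + (T : ℤ) • Pi.single i 1) = V x)
    (hA2f : ∀ x (i : Fin N) (u : ℝ), f (x + (T : ℤ) • Pi.single i 1) u = f x u)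
    (hVpos : ∀ x, 0 < V x)
    (hA3 : ∀ ε > (0:ℝ), ∃ δ > (0:ℝ), ∀ x u, |u| < δ → |f x u| ≤ ε * |u| ^ (p - 1))
    (hA4 : ∀ x, StrictMonoOn (fun u => f x u / |u| ^ (p - 1)) (Set.Iio 0) ∧
               StrictMonoOn (fun u => f x u / |u| ^ (p - 1)) (Set.Ioi 0))
    (hA5 : ∀ M : ℝ, ∃ R > (0:ℝ), ∀ x u, R ≤ |u| → M ≤ Fprim f x u / |u| ^ p) :
    (∃ u ∈ Nehari N p V f,
        (∀ v ∈ Nehari N p V f, PhiFun N p V f u ≤ PhiFun N p V f v) ∧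
        0 < PhiFun N p V f u) ∧
    (∀ u ∈ Nehari N p V f,
      (∀ v ∈ Nehari N p V f, PhiFun N p V f u ≤ PhiFun N p V f v) →
        ((∀ x, -pLap N p u x + V x * |u x| ^ (p - 2) * u x = f x (u x)) ∧
         u ≠ 0 ∧
         (∀ w : Vtx N → ℝ, memE N p w → w ≠ 0 →
            (∀ x, -pLap N p w x + V x * |w x| ^ (p - 2) * w x = f x (w x)) →
            PhiFun N p V f u ≤ PhiFun N p V f w))) :=
  stmt_17_general N p hp V f T hT hfc hA2V hA2f hVpos hA3 hA4 hA5
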